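/- arXiv:2507.03688 — 4 statements merged into one kernel-verified Lean document; each statement's English description precedes it below -/
import Mathlib

section
/- Existence and decay of the similarity profile for the porous medium equation: Let the pressure be the γ-law p(ρ) = k ρ^γ with constants k > 0 and γ ≥ 1, and let α > 0. Then for every pair ρ₊, ρ₋ > 0 there exists a function ρ* ∈ C^∞(ℝ) that satisfies 0 = (1/α)(p(ρ*))″(y) + (y/2)(ρ*)′(y) for all y ∈ ℝ and ρ*(y) → ρ± as y → ±∞. Moreover, ρ* is monotone, and there exist constants C, c > 0 such that |ρ*(y) − ρ̂(y)| + |(ρ*)′(y)| + |(ρ*)″(y)| ≤ C |ρ₊ − ρ₋| e^{−cαy²} for all y ∈ ℝ. In particular, 0 < min{ρ₋,ρ₊} ≤ ρ*(y) ≤ max{ρ₋,ρ₊} for all y ∈ ℝ. -/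
noncomputable section
open MeasureTheory Real Set Filter

/-- The step function `ρ̂`. -/
def rhoHat (ρm ρp : ℝ) (y : ℝ) : ℝ := if y < 0 then ρm else ρp

/-- Green kernel of `-d²/dx²` on `[0,1]`. -/
def gk (x s : ℝ) : ℝ := min x s * (1 - max x s)

/-- Projection to `[0,1]`. -/
def clamp (x : ℝ) : ℝ := max 0 (min x 1)

lemma clamp_mem (x : ℝ) : clamp x ∈ Icc (0:ℝ) 1 := by
  unfold clamp; constructor <;> simp

lemma clamp_of_mem {x : ℝ} (h : x ∈ Icc (0:ℝ) 1) : clamp x = x := by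
  unfold clamp; rw [min_eq_left h.2, max_eq_right h.1]

lemma continuous_clamp : Continuous clamp := by unfold clamp; fun_prop

lemma continuous_gk : Continuous (Function.uncurry gk) := by
  unfold gk Function.uncurry; fun_prop

lemma gk_nonneg {x s : ℝ} (hx : x ∈ Icc (0:ℝ) 1) (hs : s ∈ Icc (0:ℝ) 1) : 0 ≤ gk x s := by
  unfold gk
  exact mul_nonneg (le_min hx.1 hs.1) (by have := max_le hx.2 hs.2; linarith)

lemma gk_le {x s : ℝ} (hx : x ∈ Icc (0:ℝ) 1) (hs : s ∈ Icc (0:ℝ) 1) : gk x s ≤ s * (1 - s) := by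
  unfold gk
  exact mul_le_mul (min_le_right _ _) (by have := le_max_right x s; linarith)
    (by have := max_le hx.2 hs.2; linarith) hs.1

lemma gk_ge {x s : ℝ} (hx : x ∈ Icc (0:ℝ) 1) (hs : s ∈ Icc (0:ℝ) 1) :
    x * (1 - x) * (s * (1 - s)) ≤ gk x s := by
  unfold gk
  obtain ⟨h1, h2⟩ := hx
  obtain ⟨h3, h4⟩ := hs
  rcases le_total x s with h | h
  · rw [min_eq_left h, max_eq_right h]
    have : (1 - x) * s ≤ 1 := by nlinarith
    have h5 : 0 ≤ x * (1 - s) := mul_nonneg h1 (by linarith)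
    nlinarith
  · rw [min_eq_right h, max_eq_left h]
    have : x * (1 - s) ≤ 1 := by nlinarith
    have h5 : 0 ≤ s * (1 - x) := mul_nonneg h3 (by linarith)
    nlinarith

lemma gk_le_one {x s : ℝ} (hx : x ∈ Icc (0:ℝ) 1) (hs : s ∈ Icc (0:ℝ) 1) : gk x s ≤ 1 := by
  have := gk_le hx hs
  nlinarith [hs.1, hs.2]

lemma log_contr {ε N X Z d : ℝ} (hε : 0 < ε) (hZ : 0 ≤ Z) (hZN : Z ≤ N)
    (hd : 0 ≤ d) (h : Z ≤ exp d * X) :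
    log (ε + Z) - log (ε + X) ≤ N / (ε + N) * d := by
  have hN : 0 ≤ N := hZ.trans hZN
  set p := Z / (ε + Z) with hp
  have hp0 : 0 ≤ p := by positivity
  have hp1 : p ≤ 1 := by rw [hp, div_le_one (by positivity)]; linarith
  have hpN : p ≤ N / (ε + N) := by
    rw [hp, div_le_div_iff₀ (by positivity) (by positivity)]; nlinarith
  have h1 : exp (-d) * Z ≤ X := by
    rw [exp_neg, inv_mul_le_iff₀ (exp_pos d)]; exact h
  have e1 : exp (-(p*d)) * (1 + p * d) ≤ 1 := by
    have := add_one_le_exp (p*d)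
    rw [exp_neg, inv_mul_le_iff₀ (exp_pos _)]; linarith
  have e2 : exp (-(p*d)) * (1 - (1-p)*d) ≤ exp (-d) := by
    have : exp (-d) = exp (-(p*d)) * exp (-((1-p)*d)) := by rw [← exp_add]; congr 1; ring
    rw [this]
    have := add_one_le_exp (-((1-p)*d))
    exact mul_le_mul_of_nonneg_left (by linarith) (exp_pos _).le
  have e3 : exp (-(p*d)) ≤ (1-p) + p * exp (-d) := by
    have a1 := mul_le_mul_of_nonneg_left e1 (by linarith : 0 ≤ 1 - p)
    have a2 := mul_le_mul_of_nonneg_left e2 hp0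
    nlinarith
  have hpz : p * (ε + Z) = Z := by rw [hp]; field_simp
  have e4 : (ε + Z) * exp (-(p*d)) ≤ ε + X := by
    calc _ ≤ (ε + Z) * ((1-p) + p * exp (-d)) := mul_le_mul_of_nonneg_left e3 (by positivity)
      _ = ε + exp (-d) * Z := by linear_combination (exp (-d) - 1) * hpz
      _ ≤ _ := by linarith
  have e5 := log_le_log (by positivity) e4
  rw [log_mul (by positivity) (exp_pos _).ne', log_exp] at e5
  have := mul_le_mul_of_nonneg_right hpN hd
  linarith

/-- Solutions of the regularised integral equation. -/
lemma exists_reg (a : ℝ → ℝ) (a1 : ℝ) (ha : Continuous a) (ha0 : ∀ x, 0 < a x)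
    (ha1 : ∀ x, a x ≤ a1) (ε : ℝ) (hε : 0 < ε) :
    ∃ u : ℝ → ℝ, Continuous u ∧ (∀ x, ε ≤ u x) ∧
      ∀ x ∈ Icc (0:ℝ) 1, u x = ε + ∫ s in (0:ℝ)..1, gk x s * (a s / u s) := by
  have ha1p : 0 < a1 := (ha0 0).trans_le (ha1 0)
  set N := a1 / ε with hN
  have hNp : 0 < N := by positivity
  let I : (ℝ → ℝ) → ℝ → ℝ := fun f x =>
    ∫ s in (0:ℝ)..1, gk (clamp x) s * (a s * exp (-(max (f s) (log ε))))
  have cont2 : ∀ f : ℝ → ℝ, Continuous f → Continuous (Function.uncurry fun x s =>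
      gk (clamp x) s * (a s * exp (-(max (f s) (log ε))))) := by
    intro f hf
    have h1 : Continuous (fun p : ℝ × ℝ => gk (clamp p.1) p.2) :=
      continuous_gk.comp ((continuous_clamp.comp continuous_fst).prodMk continuous_snd)
    unfold Function.uncurry
    fun_prop
  have contI : ∀ f : ℝ → ℝ, Continuous f → Continuous (I f) := fun f hf =>
    intervalIntegral.continuous_parametric_intervalIntegral_of_continuous' (cont2 f hf) 0 1
  have cont1 : ∀ f : ℝ → ℝ, Continuous f → ∀ x, Continuous (fun s =>
      gk (clamp x) s * (a s * exp (-(max (f s) (log ε))))) := fun f hf x =>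
    (cont2 f hf).comp (Continuous.prodMk_right x)
  have I0 : ∀ f : ℝ → ℝ, ∀ x, 0 ≤ I f x := by
    intro f x
    apply intervalIntegral.integral_nonneg zero_le_one
    intro s hs
    exact mul_nonneg (gk_nonneg (clamp_mem x) hs) (mul_nonneg (ha0 s).le (exp_pos _).le)
  have IN : ∀ f : ℝ → ℝ, Continuous f → ∀ x, I f x ≤ N := by
    intro f hf x
    have : I f x ≤ ∫ s in (0:ℝ)..1, N := by
      apply intervalIntegral.integral_mono_on zero_le_one
        ((cont1 f hf x).intervalIntegrable _ _) intervalIntegrable_const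
      intro s hs
      have h1 : exp (-(max (f s) (log ε))) ≤ 1 / ε := by
        rw [exp_neg, one_div]
        apply inv_anti₀ hε
        calc ε = exp (log ε) := (exp_log hε).symm
          _ ≤ _ := exp_le_exp.2 (le_max_right _ _)
      have h2 : a s * exp (-(max (f s) (log ε))) ≤ N := by
        rw [hN, div_eq_mul_one_div]
        exact mul_le_mul (ha1 s) h1 (exp_pos _).le ha1p.le
      calc _ ≤ 1 * N := mul_le_mul (gk_le_one (clamp_mem x) hs) h2
            (mul_nonneg (ha0 s).le (exp_pos _).le) zero_le_one
        _ = N := one_mul N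
    simpa using this
  have contL : ∀ f : ℝ → ℝ, Continuous f → Continuous (fun x => log (ε + I f x)) := by
    intro f hf
    have := contI f hf
    exact Continuous.log (by fun_prop) (fun x => by have := I0 f x; positivity)
  have bdd : ∀ f : ℝ → ℝ, Continuous f → ∀ x, ‖log (ε + I f x)‖ ≤ |log ε| + |log (ε + N)| := by
    intro f hf x
    have h1 : log ε ≤ log (ε + I f x) := log_le_log hε (by linarith [I0 f x])
    have h2 : log (ε + I f x) ≤ log (ε + N) :=
      log_le_log (by linarith [I0 f x]) (by linarith [IN f hf x])
    rw [norm_eq_abs, abs_le]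
    have := neg_abs_le (log ε)
    have := le_abs_self (log (ε + N))
    have := abs_nonneg (log ε)
    have := abs_nonneg (log (ε + N))
    constructor <;> linarith
  let S : BoundedContinuousFunction ℝ ℝ → BoundedContinuousFunction ℝ ℝ := fun f =>
    BoundedContinuousFunction.ofNormedAddCommGroup (fun x => log (ε + I f x))
      (contL f f.continuous) _ (bdd f f.continuous)
  have hS : ∀ f x, S f x = log (ε + I f x) := fun f x => rfl
  have key : ∀ f g : BoundedContinuousFunction ℝ ℝ, ∀ x,
      log (ε + I f x) - log (ε + I g x) ≤ N / (ε + N) * dist f g := by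
    intro f g x
    apply log_contr hε (I0 f x) (IN f f.continuous x) dist_nonneg
    rw [← intervalIntegral.integral_const_mul]
    apply intervalIntegral.integral_mono_on zero_le_one
        ((cont1 f f.continuous x).intervalIntegrable _ _)
        (((cont1 g g.continuous x).const_mul _).intervalIntegrable _ _)
    intro s hs
    have h1 : |f s - g s| ≤ dist f g := by
      rw [← Real.dist_eq]; exact BoundedContinuousFunction.dist_coe_le_dist s
    have h2 := (abs_max_sub_max_le_abs (f s) (g s) (log ε)).trans h1
    have h3 : exp (-(max (f s) (log ε))) ≤ exp (dist f g) * exp (-(max (g s) (log ε))) := by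
      rw [← exp_add]
      apply exp_le_exp.2
      have := (abs_le.1 h2).1
      linarith
    have h4 := mul_le_mul_of_nonneg_left h3
      (mul_nonneg (gk_nonneg (clamp_mem x) hs) (ha0 s).le)
    linarith
  have hθ : N / (ε + N) < 1 := by rw [div_lt_one (by positivity)]; linarith
  have hθ0 : 0 ≤ N / (ε + N) := by positivity
  have hc : ContractingWith (⟨N / (ε + N), hθ0⟩ : NNReal) S := by
    refine ⟨by exact_mod_cast hθ, LipschitzWith.of_dist_le_mul fun f g => ?_⟩
    change dist (S f) (S g) ≤ N / (ε + N) * dist f g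
    rw [BoundedContinuousFunction.dist_le (mul_nonneg hθ0 dist_nonneg)]
    intro x
    rw [hS, hS, Real.dist_eq, abs_le]
    have h1 := key f g x
    have h2 := key g f x
    rw [dist_comm g f] at h2
    constructor <;> linarith
  have hfix := hc.fixedPoint_isFixedPt
  set f := ContractingWith.fixedPoint S hc
  have hfx : ∀ x, f x = log (ε + I f x) := fun x => by rw [← hS, hfix.eq]
  have hge : ∀ x, log ε ≤ f x := fun x => by
    rw [hfx]; exact log_le_log hε (by linarith [I0 f x])
  refine ⟨fun x => exp (f x), continuous_exp.comp f.continuous, fun x => ?_, fun x hx => ?_⟩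
  · calc ε = exp (log ε) := (exp_log hε).symm
      _ ≤ _ := exp_le_exp.2 (hge x)
  · change exp (f x) = _
    rw [hfx x, exp_log (by linarith [I0 f x])]
    congr 1
    change (∫ s in (0:ℝ)..1, gk (clamp x) s * (a s * exp (-(max (f s) (log ε))))) = _
    congr 1
    ext s
    rw [clamp_of_mem hx, max_eq_left (hge s), exp_neg, div_eq_mul_inv]

lemma ii_of_bdd {h : ℝ → ℝ} {l r C : ℝ} (hlr : l ≤ r) (hc : ContinuousOn h (Ioo l r))
    (hC : ∀ s ∈ Ioo l r, |h s| ≤ C) : IntervalIntegrable h volume l r := by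
  rw [intervalIntegrable_iff_integrableOn_Ioo_of_le hlr]
  refine IntegrableOn.of_bound (by simp)
    (hc.aestronglyMeasurable measurableSet_Ioo) C ?_
  rw [ae_restrict_iff' measurableSet_Ioo]
  exact ae_of_all _ hC

/-- Derivative of the Green potential. -/
def gv (f : ℝ → ℝ) (x : ℝ) : ℝ := (∫ s in x..1, (1 - s) * f s) - ∫ s in (0:ℝ)..x, s * f s

lemma green_deriv (f : ℝ → ℝ) (hf : ContinuousOn f (Ioo 0 1)) (C : ℝ)
    (hC : ∀ s ∈ Ioo (0:ℝ) 1, |s * (1 - s) * f s| ≤ C) (x : ℝ) (hx : x ∈ Ioo (0:ℝ) 1) :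
    HasDerivAt (fun x => ∫ s in (0:ℝ)..1, gk x s * f s) (gv f x) x ∧
    HasDerivAt (gv f) (-f x) x := by
  have hl : ∀ x ∈ Ioo (0:ℝ) 1, IntervalIntegrable (fun s => s * f s) volume 0 x := by
    intro x hx
    apply ii_of_bdd (C := C / (1 - x)) hx.1.le
    · exact continuousOn_id.mul (hf.mono (Ioo_subset_Ioo le_rfl hx.2.le))
    · intro s hs
      have h1 := hC s ⟨hs.1, hs.2.trans hx.2⟩
      have h2 : 0 < 1 - x := by linarith [hx.2]
      have h3 : 1 - x ≤ 1 - s := by linarith [hs.2]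
      rw [le_div_iff₀ h2]
      have e : |s * (1 - s) * f s| = |s * f s| * (1 - s) := by
        rw [show s * (1 - s) * f s = (s * f s) * (1 - s) by ring, abs_mul,
          abs_of_nonneg (h2.le.trans h3)]
      rw [e] at h1
      exact (mul_le_mul_of_nonneg_left h3 (abs_nonneg _)).trans h1
  have hr : ∀ x ∈ Ioo (0:ℝ) 1, IntervalIntegrable (fun s => (1 - s) * f s) volume x 1 := by
    intro x hx
    apply ii_of_bdd (C := C / x) hx.2.le
    · exact (continuousOn_const.sub continuousOn_id).mul (hf.mono (Ioo_subset_Ioo hx.1.le le_rfl))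
    · intro s hs
      have h1 := hC s ⟨hx.1.trans hs.1, hs.2⟩
      rw [le_div_iff₀ hx.1]
      have e : |s * (1 - s) * f s| = |(1 - s) * f s| * s := by
        rw [show s * (1 - s) * f s = ((1 - s) * f s) * s by ring, abs_mul,
          abs_of_nonneg (hx.1.le.trans hs.1.le)]
      rw [e] at h1
      exact (mul_le_mul_of_nonneg_left hs.1.le (abs_nonneg _)).trans h1
  have hnh : Ioo (0:ℝ) 1 ∈ nhds x := isOpen_Ioo.mem_nhds hx
  have c1 : ContinuousOn (fun s => s * f s) (Ioo 0 1) := continuousOn_id.mul hf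
  have c2 : ContinuousOn (fun s => (1 - s) * f s) (Ioo 0 1) :=
    (continuousOn_const.sub continuousOn_id).mul hf
  have d1 : HasDerivAt (fun x => ∫ s in (0:ℝ)..x, s * f s) (x * f x) x :=
    intervalIntegral.integral_hasDerivAt_right (hl x hx)
      (c1.stronglyMeasurableAtFilter isOpen_Ioo x hx) (c1.continuousAt hnh)
  have d2 : HasDerivAt (fun x => ∫ s in x..1, (1 - s) * f s) (-((1 - x) * f x)) x :=
    intervalIntegral.integral_hasDerivAt_left (hr x hx)
      (c2.stronglyMeasurableAtFilter isOpen_Ioo x hx) (c2.continuousAt hnh)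
  constructor
  · have rep : ∀ y ∈ Ioo (0:ℝ) 1, ∫ s in (0:ℝ)..1, gk y s * f s =
        (1 - y) * (∫ s in (0:ℝ)..y, s * f s) + y * ∫ s in y..1, (1 - s) * f s := by
      intro y hy
      have e1 : EqOn (fun s => (1 - y) * (s * f s)) (fun s => gk y s * f s) (uIcc 0 y) := by
        intro s hs
        rw [uIcc_of_le hy.1.le] at hs
        simp only [gk, min_eq_right hs.2, max_eq_left hs.2]; ring
      have e2 : EqOn (fun s => y * ((1 - s) * f s)) (fun s => gk y s * f s) (uIcc y 1) := by
        intro s hs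
        rw [uIcc_of_le hy.2.le] at hs
        simp only [gk, min_eq_left hs.1, max_eq_right hs.1]; ring
      have i1 : IntervalIntegrable (fun s => gk y s * f s) volume 0 y :=
        ((hl y hy).const_mul (1 - y)).congr (e1.mono uIoc_subset_uIcc)
      have i2 : IntervalIntegrable (fun s => gk y s * f s) volume y 1 :=
        ((hr y hy).const_mul y).congr (e2.mono uIoc_subset_uIcc)
      rw [← intervalIntegral.integral_add_adjacent_intervals i1 i2,
        ← intervalIntegral.integral_const_mul, ← intervalIntegral.integral_const_mul,
        intervalIntegral.integral_congr e1, intervalIntegral.integral_congr e2]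
    have d3 := (((hasDerivAt_id x).const_sub 1).mul d1).add ((hasDerivAt_id x).mul d2)
    refine (d3.congr_of_eventuallyEq ?_).congr_deriv ?_
    · filter_upwards [hnh] with y hy
      simpa using rep y hy
    · simp only [gv, id]; ring
  · exact (d2.sub d1).congr_deriv (by ring)

/-- Second derivative test. -/
lemma no_max {w v : ℝ → ℝ} {x c : ℝ} (h1 : ∀ᶠ y in nhds x, HasDerivAt w (v y) y)
    (h2 : HasDerivAt v c x) (hc : 0 < c) (hm : IsLocalMax w x) : False := by
  have e : deriv w =ᶠ[nhds x] v := h1.mono fun y hy => hy.deriv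
  have d2 : deriv (deriv w) x = c := by rw [e.deriv_eq, h2.deriv]
  have d1 : deriv w x = 0 := hm.deriv_eq_zero
  have hmin := isLocalMin_of_deriv_deriv_pos (by rw [d2]; exact hc) d1
    h1.self_of_nhds.continuousAt
  have hconst : w =ᶠ[nhds x] fun _ => w x := by
    filter_upwards [hm, hmin] with y a b using le_antisymm a b
  have := hconst.deriv.deriv_eq
  rw [d2] at this
  simp at this
  linarith

lemma reg_deriv (a u : ℝ → ℝ) (ε : ℝ) (ha : Continuous a) (hε : 0 < ε) (hu : Continuous u)
    (hge : ∀ x, ε ≤ u x)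
    (h : ∀ x ∈ Icc (0:ℝ) 1, u x = ε + ∫ s in (0:ℝ)..1, gk x s * (a s / u s))
    (x : ℝ) (hx : x ∈ Ioo (0:ℝ) 1) :
    HasDerivAt u (gv (fun s => a s / u s) x) x ∧
    HasDerivAt (gv (fun s => a s / u s)) (-(a x / u x)) x := by
  have hc : Continuous (fun s => a s / u s) := ha.div hu fun s => (hε.trans_le (hge s)).ne'
  obtain ⟨C, hC⟩ := (isCompact_Icc (a := (0:ℝ)) (b := 1)).exists_bound_of_continuousOn
    (f := fun s => s * (1 - s) * (a s / u s)) (by fun_prop)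
  obtain ⟨d1, d2⟩ := green_deriv _ hc.continuousOn C
    (fun s hs => hC s (Ioo_subset_Icc_self hs)) x hx
  refine ⟨(d1.const_add ε).congr_of_eventuallyEq ?_, d2⟩
  filter_upwards [isOpen_Ioo.mem_nhds hx] with y hy using h y (Ioo_subset_Icc_self hy)

lemma gk_zero {s : ℝ} (hs : s ∈ Icc (0:ℝ) 1) : gk 0 s = 0 := by
  simp [gk, min_eq_left hs.1]

lemma gk_one {s : ℝ} (hs : s ∈ Icc (0:ℝ) 1) : gk 1 s = 0 := by
  simp [gk, max_eq_left hs.2]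

lemma green_zero (f : ℝ → ℝ) : ∫ s in (0:ℝ)..1, gk 0 s * f s = 0 := by
  rw [intervalIntegral.integral_congr (g := fun _ => (0:ℝ))]
  · simp
  · intro s hs
    rw [uIcc_of_le zero_le_one] at hs
    simp [gk_zero hs]

lemma green_one (f : ℝ → ℝ) : ∫ s in (0:ℝ)..1, gk 1 s * f s = 0 := by
  rw [intervalIntegral.integral_congr (g := fun _ => (0:ℝ))]
  · simp
  · intro s hs
    rw [uIcc_of_le zero_le_one] at hs
    simp [gk_one hs]

/-- Comparison. -/
lemma reg_mono (a u1 u2 : ℝ → ℝ) (ε1 ε2 : ℝ) (ha : Continuous a) (ha0 : ∀ x, 0 < a x)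
    (hε : 0 < ε1) (h12 : ε1 ≤ ε2)
    (hu1 : Continuous u1) (hge1 : ∀ x, ε1 ≤ u1 x)
    (h1 : ∀ x ∈ Icc (0:ℝ) 1, u1 x = ε1 + ∫ s in (0:ℝ)..1, gk x s * (a s / u1 s))
    (hu2 : Continuous u2) (hge2 : ∀ x, ε2 ≤ u2 x)
    (h2 : ∀ x ∈ Icc (0:ℝ) 1, u2 x = ε2 + ∫ s in (0:ℝ)..1, gk x s * (a s / u2 s)) :
    ∀ x ∈ Icc (0:ℝ) 1, u1 x ≤ u2 x := by
  by_contra hcon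
  push Not at hcon
  obtain ⟨y, hy, hlt⟩ := hcon
  obtain ⟨x, hx, hmax⟩ := (isCompact_Icc (a := (0:ℝ)) (b := 1)).exists_isMaxOn ⟨y, hy⟩
    (hu1.sub hu2).continuousOn
  have hpos : u2 x < u1 x := by
    have : u1 y - u2 y ≤ u1 x - u2 x := hmax hy
    linarith
  have hx0 : x ≠ 0 := by
    rintro rfl
    rw [h1 0 hx, h2 0 hx, green_zero, green_zero] at hpos
    linarith
  have hx1 : x ≠ 1 := by
    rintro rfl
    rw [h1 1 hx, h2 1 hx, green_one, green_one] at hpos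
    linarith
  have hxo : x ∈ Ioo (0:ℝ) 1 := ⟨lt_of_le_of_ne hx.1 hx0.symm, lt_of_le_of_ne hx.2 hx1⟩
  have hnh := isOpen_Ioo.mem_nhds hxo
  have D1 := reg_deriv a u1 ε1 ha hε hu1 hge1 h1
  have D2 := reg_deriv a u2 ε2 ha (hε.trans_le h12) hu2 hge2 h2
  refine no_max (w := fun x => u1 x - u2 x) (x := x) ?_ ((D1 x hxo).2.sub (D2 x hxo).2) ?_
    (hmax.isLocalMax (mem_of_superset hnh Ioo_subset_Icc_self))
  · filter_upwards [hnh] with z hz using (D1 z hz).1.sub (D2 z hz).1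
  · have : a x / u1 x < a x / u2 x :=
      div_lt_div_of_pos_left (ha0 x) ((hε.trans_le h12).trans_le (hge2 x)) hpos
    linarith

lemma exists_q (a : ℝ → ℝ) (a0 a1 : ℝ) (ha : Continuous a) (ha0 : 0 < a0) (hage : ∀ x, a0 ≤ a x)
    (ha1 : ∀ x, a x ≤ a1) :
    ∃ q q1 : ℝ → ℝ, ∃ κ > 0, ContinuousOn q (Icc 0 1) ∧ q 0 = 0 ∧ q 1 = 0 ∧
      ∀ x ∈ Ioo (0:ℝ) 1, κ * (x * (1 - x)) ≤ q x ∧ HasDerivAt q (q1 x) x ∧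
        HasDerivAt q1 (-(a x / q x)) x := by
  have hap : ∀ x, 0 < a x := fun x => ha0.trans_le (hage x)
  have ha1p : 0 < a1 := (hap 0).trans_le (ha1 0)
  have hεp : ∀ n : ℕ, (0:ℝ) < 1 / ((n:ℝ) + 1) := fun n => Nat.one_div_pos_of_nat
  choose u hu hge hueq using fun n : ℕ => exists_reg a a1 ha hap ha1 (1 / ((n:ℝ) + 1)) (hεp n)
  have hup : ∀ n x, 0 < u n x := fun n x => (hεp n).trans_le (hge n x)
  have hanti : ∀ x ∈ Icc (0:ℝ) 1, Antitone fun n => u n x := by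
    intro x hx m n hmn
    exact reg_mono a (u n) (u m) _ _ ha hap (hεp n) (Nat.one_div_le_one_div hmn) (hu n) (hge n)
      (hueq n) (hu m) (hge m) (hueq m) x hx
  obtain ⟨M, hM⟩ := (isCompact_Icc (a := (0:ℝ)) (b := 1)).exists_bound_of_continuousOn
    (hu 0).continuousOn
  have hMle : ∀ n, ∀ x ∈ Icc (0:ℝ) 1, u n x ≤ M := fun n x hx =>
    ((hanti x hx (Nat.zero_le n)).trans (le_abs_self _)).trans (hM x hx)
  have hMp : 0 < M := (hup 0 0).trans_le (hMle 0 0 (by simp))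
  set J := ∫ s in (0:ℝ)..1, s * (1 - s) with hJ
  have hJp : 0 < J := by
    refine intervalIntegral.intervalIntegral_pos_of_pos_on
      (Continuous.intervalIntegrable (by fun_prop) _ _) ?_ zero_lt_one
    intro s hs
    exact mul_pos hs.1 (by linarith [hs.2])
  set κ := a0 / M * J with hκ
  have hκp : 0 < κ := by positivity
  have hint : ∀ n x, IntervalIntegrable (fun s => gk x s * (a s / u n s)) volume 0 1 := by
    intro n x
    apply Continuous.intervalIntegrable
    have h1 : Continuous (gk x) := continuous_gk.comp (Continuous.prodMk_right x)
    exact h1.mul (ha.div (hu n) fun s => (hup n s).ne')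
  have hlow : ∀ n, ∀ x ∈ Icc (0:ℝ) 1, κ * (x * (1 - x)) ≤ u n x := by
    intro n x hx
    rw [hueq n x hx]
    have : κ * (x * (1 - x)) ≤ ∫ s in (0:ℝ)..1, gk x s * (a s / u n s) := by
      rw [show κ * (x * (1 - x)) = (x * (1 - x) * (a0 / M)) * J by rw [hκ]; ring, hJ,
        ← intervalIntegral.integral_const_mul]
      apply intervalIntegral.integral_mono_on zero_le_one
        (Continuous.intervalIntegrable (by fun_prop) _ _) (hint n x)
      intro s hs
      have h1 : a0 / M ≤ a s / u n s := div_le_div₀ (hap s).le (hage s) (hup n s) (hMle n s hs)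
      have h2 := gk_ge hx hs
      have h3 := mul_le_mul h2 h1 (by positivity) (gk_nonneg hx hs)
      linarith
    linarith [hεp n]
  let q : ℝ → ℝ := fun x => ⨅ n, u n x
  have hbdd : ∀ x, BddBelow (range fun n => u n x) := fun x =>
    ⟨0, by rintro _ ⟨n, rfl⟩; exact (hup n x).le⟩
  have hqmeas : Measurable q := Measurable.iInf fun n => (hu n).measurable
  have hqt : ∀ x ∈ Icc (0:ℝ) 1, Tendsto (fun n => u n x) atTop (nhds (q x)) := fun x hx =>
    tendsto_atTop_ciInf (hanti x hx) (hbdd x)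
  have hqlow : ∀ x ∈ Icc (0:ℝ) 1, κ * (x * (1 - x)) ≤ q x := fun x hx =>
    le_ciInf fun n => hlow n x hx
  have hss : ∀ x ∈ Ioo (0:ℝ) 1, 0 < x * (1 - x) := fun x hx => mul_pos hx.1 (by linarith [hx.2])
  have hqp : ∀ x ∈ Ioo (0:ℝ) 1, 0 < q x := fun x hx =>
    (mul_pos hκp (hss x hx)).trans_le (hqlow x (Ioo_subset_Icc_self hx))
  have bnd : ∀ s ∈ Ioo (0:ℝ) 1, ∀ w, κ * (s * (1 - s)) ≤ w → s * (1 - s) * (a s / w) ≤ a1 / κ := by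
    intro s hs w hw
    have h1 := hss s hs
    have hw0 : 0 < w := (mul_pos hκp h1).trans_le hw
    rw [← mul_div_assoc, div_le_div_iff₀ hw0 hκp]
    have := ha1 s
    have h3 := mul_le_mul_of_nonneg_left hw (hap s).le
    have h4 := mul_le_mul_of_nonneg_right this hw0.le
    nlinarith
  have bnd2 : ∀ x ∈ Icc (0:ℝ) 1, ∀ s ∈ Ioo (0:ℝ) 1, ∀ w, κ * (s * (1 - s)) ≤ w →
      ‖gk x s * (a s / w)‖ ≤ a1 / κ := by
    intro x hx s hs w hw
    have hw0 : 0 < w := (mul_pos hκp (hss s hs)).trans_le hw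
    have hsI := Ioo_subset_Icc_self hs
    have h0 : 0 ≤ a s / w := div_nonneg (hap s).le hw0.le
    rw [norm_eq_abs, abs_of_nonneg (mul_nonneg (gk_nonneg hx hsI) h0)]
    exact (mul_le_mul_of_nonneg_right (gk_le hx hsI) h0).trans (bnd s hs w hw)
  have hae : ∀ᵐ s ∂(volume : Measure ℝ), s ∈ Set.uIoc (0:ℝ) 1 → s ∈ Ioo (0:ℝ) 1 := by
    have : ∀ᵐ s ∂(volume : Measure ℝ), s ≠ 1 := by simp [ae_iff, measure_singleton]
    filter_upwards [this] with s h1 hs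
    rw [uIoc_of_le zero_le_one] at hs
    exact ⟨hs.1, lt_of_le_of_ne hs.2 h1⟩
  have gkm : ∀ x, Measurable (gk x) := fun x =>
    (continuous_gk.comp (Continuous.prodMk_right x)).measurable
  have hqeq : ∀ x ∈ Icc (0:ℝ) 1, q x = ∫ s in (0:ℝ)..1, gk x s * (a s / q s) := by
    intro x hx
    have t1 : Tendsto (fun n => ∫ s in (0:ℝ)..1, gk x s * (a s / u n s)) atTop
        (nhds (∫ s in (0:ℝ)..1, gk x s * (a s / q s))) := by
      apply intervalIntegral.tendsto_integral_filter_of_dominated_convergence (fun _ => a1 / κ)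
      · exact Eventually.of_forall fun n =>
          ((gkm x).mul (ha.measurable.div (hu n).measurable)).aestronglyMeasurable
      · refine Eventually.of_forall fun n => ?_
        filter_upwards [hae] with s h1 hs
        exact bnd2 x hx s (h1 hs) _ (hlow n s (Ioo_subset_Icc_self (h1 hs)))
      · exact intervalIntegrable_const
      · filter_upwards [hae] with s h1 hs
        exact (tendsto_const_nhds.div (hqt s (Ioo_subset_Icc_self (h1 hs)))
          (hqp s (h1 hs)).ne').const_mul _
    have t2 : Tendsto (fun n => u n x) atTop
        (nhds (0 + ∫ s in (0:ℝ)..1, gk x s * (a s / q s))) :=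
      (tendsto_one_div_add_atTop_nhds_zero_nat.add t1).congr fun n => (hueq n x hx).symm
    rw [zero_add] at t2
    exact tendsto_nhds_unique (hqt x hx) t2
  have hqc : ContinuousOn q (Icc 0 1) := by
    have : ContinuousOn (fun x => ∫ s in (0:ℝ)..1, gk x s * (a s / q s)) (Icc 0 1) := by
      intro x hx
      apply intervalIntegral.continuousWithinAt_of_dominated_interval (bound := fun _ => a1 / κ)
      · exact Eventually.of_forall fun n =>
          ((gkm n).mul (ha.measurable.div hqmeas)).aestronglyMeasurable
      · filter_upwards [self_mem_nhdsWithin] with y hy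
        filter_upwards [hae] with s h1 hs
        exact bnd2 y hy s (h1 hs) _ (hqlow s (Ioo_subset_Icc_self (h1 hs)))
      · exact intervalIntegrable_const
      · refine ae_of_all _ fun s _ => Continuous.continuousWithinAt ?_
        have : Continuous fun y => gk y s := continuous_gk.comp (Continuous.prodMk_left s)
        fun_prop
    exact this.congr hqeq
  refine ⟨q, gv (fun s => a s / q s), κ, hκp, hqc, ?_, ?_, fun x hx => ?_⟩
  · rw [hqeq 0 (by simp)]; exact green_zero _
  · rw [hqeq 1 (by simp)]; exact green_one _
  · have hfc : ContinuousOn (fun s => a s / q s) (Ioo 0 1) :=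
      ha.continuousOn.div (hqc.mono Ioo_subset_Icc_self) fun s hs => (hqp s hs).ne'
    obtain ⟨d1, d2⟩ := green_deriv _ hfc (a1 / κ) (fun s hs => by
      rw [abs_of_nonneg (mul_nonneg (hss s hs).le (div_nonneg (hap s).le (hqp s hs).le))]
      exact bnd s hs _ (hqlow s (Ioo_subset_Icc_self hs))) x hx
    refine ⟨hqlow x (Ioo_subset_Icc_self hx), d1.congr_of_eventuallyEq ?_, d2⟩
    filter_upwards [isOpen_Ioo.mem_nhds hx] with y hy using hqeq y (Ioo_subset_Icc_self hy)

lemma unbounded_left (q q1 a : ℝ → ℝ) (a0 : ℝ) (ha0 : 0 < a0) (hage : ∀ x, a0 ≤ a x)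
    (hqc : ContinuousOn q (Icc 0 1)) (hq0 : q 0 = 0) (hqp : ∀ x ∈ Ioo (0:ℝ) 1, 0 < q x)
    (hd : ∀ x ∈ Ioo (0:ℝ) 1, HasDerivAt q (q1 x) x)
    (hd1 : ∀ x ∈ Ioo (0:ℝ) 1, HasDerivAt q1 (-(a x / q x)) x) (M0 : ℝ) :
    ∃ x ∈ Ioo (0:ℝ) 1, M0 < q1 x := by
  by_contra hcon
  push Not at hcon
  set M := max M0 1
  have hMp : 0 < M := lt_of_lt_of_le one_pos (le_max_right _ _)
  have hM : ∀ x ∈ Ioo (0:ℝ) 1, q1 x ≤ M := fun x hx => (hcon x hx).trans (le_max_left _ _)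
  have hqM : ∀ x ∈ Ioo (0:ℝ) 1, q x ≤ M * x := by
    intro x hx
    have := Convex.image_sub_le_mul_sub_of_deriv_le (convex_Icc (0:ℝ) 1) hqc
      (by rw [interior_Icc]; exact fun z hz => (hd z hz).differentiableAt.differentiableWithinAt)
      (C := M) (by rw [interior_Icc]; intro z hz; rw [(hd z hz).deriv]; exact hM z hz)
      0 (by simp) x (Ioo_subset_Icc_self hx) hx.1.le
    simpa [hq0] using this
  set κ := a0 / M
  have hκ : 0 < κ := by positivity
  have hder : ∀ x ∈ Ioo (0:ℝ) 1,
      HasDerivAt (fun x => q1 x + κ * log x) (-(a x / q x) + κ * x⁻¹) x := fun x hx =>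
    (hd1 x hx).add ((hasDerivAt_log hx.1.ne').const_mul κ)
  have hanti : AntitoneOn (fun x => q1 x + κ * log x) (Ioo 0 1) := by
    apply antitoneOn_of_deriv_nonpos (convex_Ioo _ _)
    · exact fun z hz => (hder z hz).continuousAt.continuousWithinAt
    · rw [interior_Ioo]
      exact fun z hz => (hder z hz).differentiableAt.differentiableWithinAt
    · rw [interior_Ioo]
      intro z hz
      rw [(hder z hz).deriv]
      have h1 : a0 / (M * z) ≤ a z / q z :=
        div_le_div₀ (ha0.le.trans (hage z)) (hage z) (hqp z hz) (hqM z hz)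
      have h2 : κ * z⁻¹ = a0 / (M * z) := by
        have := hz.1.ne'
        simp only [κ]; field_simp
      linarith
  set c := q1 (1/2) + κ * log (1/2)
  set t := max 1 ((M + 1 - c) / κ)
  have ht1 : 1 ≤ t := le_max_left _ _
  have ht2 : M + 1 - c ≤ t * κ := (div_le_iff₀ hκ).1 (le_max_right _ _)
  have hxle : exp (-t) ≤ 1/2 := by
    rw [exp_neg, one_div]
    apply inv_anti₀ two_pos
    have := add_one_le_exp t
    linarith
  have hx : exp (-t) ∈ Ioo (0:ℝ) 1 := ⟨exp_pos _, by linarith⟩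
  have h3 := hanti hx (by norm_num : (1/2:ℝ) ∈ Ioo (0:ℝ) 1) hxle
  simp only [log_exp] at h3
  have h4 := hM _ hx
  change c ≤ _ at h3
  nlinarith

lemma unbounded_right (q q1 a : ℝ → ℝ) (a0 : ℝ) (ha0 : 0 < a0) (hage : ∀ x, a0 ≤ a x)
    (hqc : ContinuousOn q (Icc 0 1)) (hq0 : q 1 = 0) (hqp : ∀ x ∈ Ioo (0:ℝ) 1, 0 < q x)
    (hd : ∀ x ∈ Ioo (0:ℝ) 1, HasDerivAt q (q1 x) x)
    (hd1 : ∀ x ∈ Ioo (0:ℝ) 1, HasDerivAt q1 (-(a x / q x)) x) (M0 : ℝ) :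
    ∃ x ∈ Ioo (0:ℝ) 1, q1 x < M0 := by
  have hm : ∀ x ∈ Ioo (0:ℝ) 1, 1 - x ∈ Ioo (0:ℝ) 1 := fun x hx =>
    ⟨by linarith [hx.2], by linarith [hx.1]⟩
  have hs : ∀ x : ℝ, HasDerivAt (fun x : ℝ => 1 - x) (-1) x := fun x => by
    simpa using (hasDerivAt_id x).const_sub 1
  obtain ⟨x, hx, h⟩ := unbounded_left (fun x => q (1 - x)) (fun x => -q1 (1 - x))
    (fun x => a (1 - x)) a0 ha0 (fun x => hage _)
    (hqc.comp (by fun_prop) fun x hx => ⟨by linarith [hx.2], by linarith [hx.1]⟩)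
    (by simpa using hq0) (fun x hx => hqp _ (hm x hx))
    (fun x hx => ((hd _ (hm x hx)).comp x (hs x)).congr_deriv (by ring))
    (fun x hx => ((hd1 _ (hm x hx)).comp x (hs x)).neg.congr_deriv (by ring)) (-M0)
  exact ⟨1 - x, hm x hx, by linarith⟩

lemma exists_profile (b : ℝ → ℝ) (b0 b1 : ℝ) (hb0 : 0 < b0)
    (hbs : ContDiffOn ℝ (⊤ : ℕ∞) b (Ioo 0 1)) (hbc : ContinuousOn b (Icc 0 1))
    (hbge : ∀ x ∈ Icc (0:ℝ) 1, b0 ≤ b x) (hble : ∀ x ∈ Icc (0:ℝ) 1, b x ≤ b1) :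
    ∃ X F : ℝ → ℝ, ∃ κ > 0, ContDiff ℝ (⊤ : ℕ∞) X ∧ ∀ y, X y ∈ Ioo (0:ℝ) 1 ∧ 0 < F y ∧
      HasDerivAt X (F y / b (X y)) y ∧ HasDerivAt F (-(y / 2) * (F y / b (X y))) y ∧
      κ * (X y * (1 - X y)) ≤ F y := by
  have hac : Continuous (fun x => b (clamp x) / 2) :=
    (hbc.comp_continuous continuous_clamp clamp_mem).div_const 2
  have hage : ∀ x, b0 / 2 ≤ b (clamp x) / 2 := fun x => by linarith [hbge _ (clamp_mem x)]
  obtain ⟨q, q1, κ, hκ, hqc, hq0, hq1, H⟩ := exists_q (fun x => b (clamp x) / 2) (b0 / 2) (b1 / 2)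
    hac (by positivity) hage (fun x => by linarith [hble _ (clamp_mem x)])
  have hqp : ∀ x ∈ Ioo (0:ℝ) 1, 0 < q x := fun x hx =>
    (mul_pos hκ (mul_pos hx.1 (by linarith [hx.2]))).trans_le (H x hx).1
  have hd : ∀ x ∈ Ioo (0:ℝ) 1, HasDerivAt q (q1 x) x := fun x hx => (H x hx).2.1
  have hd1' := fun x hx => (H x hx).2.2
  have ul := unbounded_left q q1 _ (b0 / 2) (by positivity) hage hqc hq0 hqp hd hd1'
  have ur := unbounded_right q q1 _ (b0 / 2) (by positivity) hage hqc hq1 hqp hd hd1'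
  have hd1 : ∀ x ∈ Ioo (0:ℝ) 1, HasDerivAt q1 (-(b x / 2 / q x)) x := by
    intro x hx
    have := hd1' x hx
    simpa only [clamp_of_mem (Ioo_subset_Icc_self hx)] using this
  have hbp : ∀ x ∈ Ioo (0:ℝ) 1, 0 < b x := fun x hx =>
    hb0.trans_le (hbge x (Ioo_subset_Icc_self hx))
  -- smoothness of q
  have hsm : ∀ n : ℕ, ContDiffOn ℝ n q (Ioo 0 1) ∧ ContDiffOn ℝ n q1 (Ioo 0 1) := by
    intro n
    induction n with
    | zero =>
      simp only [Nat.cast_zero, contDiffOn_zero]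
      exact ⟨fun x hx => (hd x hx).continuousAt.continuousWithinAt,
        fun x hx => (hd1 x hx).continuousAt.continuousWithinAt⟩
    | succ n ih =>
      push_cast
      rw [contDiffOn_succ_iff_deriv_of_isOpen isOpen_Ioo,
        contDiffOn_succ_iff_deriv_of_isOpen isOpen_Ioo]
      refine ⟨⟨fun x hx => (hd x hx).differentiableAt.differentiableWithinAt, by simp, ?_⟩,
        fun x hx => (hd1 x hx).differentiableAt.differentiableWithinAt, by simp, ?_⟩
      · exact ih.2.congr fun x hx => (hd x hx).deriv
      · have hbn : ContDiffOn ℝ n b (Ioo 0 1) := contDiffOn_infty.1 hbs n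
        exact ((hbn.div_const 2).div ih.1 fun x hx => (hqp x hx).ne').neg.congr
          fun x hx => (hd1 x hx).deriv
  -- the inverse function
  let Y : ℝ → ℝ := fun x => -2 * q1 x
  have hY : ∀ x ∈ Ioo (0:ℝ) 1, HasDerivAt Y (b x / q x) x := fun x hx =>
    ((hd1 x hx).const_mul (-2)).congr_deriv (by ring)
  have hYc : ContinuousOn Y (Ioo 0 1) := fun x hx => (hY x hx).continuousAt.continuousWithinAt
  have hYm : StrictMonoOn Y (Ioo 0 1) := by
    apply strictMonoOn_of_deriv_pos (convex_Ioo _ _) hYc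
    rw [interior_Ioo]
    intro x hx
    rw [(hY x hx).deriv]
    exact div_pos (hbp x hx) (hqp x hx)
  have hYs : Y '' Ioo 0 1 = univ := by
    apply eq_univ_of_forall
    intro y
    obtain ⟨x1, hx1, h1⟩ := ul (-y/2)
    obtain ⟨x2, hx2, h2⟩ := ur (-y/2)
    refine isPreconnected_Ioo.intermediate_value hx1 hx2 hYc ⟨?_, ?_⟩
    · simp only [Y]; linarith
    · simp only [Y]; linarith
  let e := (StrictMonoOn.orderIso Y (Ioo 0 1) hYm).trans
    ((OrderIso.setCongr _ _ hYs).trans OrderIso.Set.univ)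
  have hec : Continuous e.symm := e.symm.continuous
  let X : ℝ → ℝ := fun y => (e.symm y : ℝ)
  have hXm : ∀ y, X y ∈ Ioo (0:ℝ) 1 := fun y => (e.symm y).2
  have hXc : Continuous X := continuous_subtype_val.comp hec
  have hYX : ∀ y, Y (X y) = y := fun y => e.apply_symm_apply y
  have hXd : ∀ y, HasDerivAt X (q (X y) / b (X y)) y := by
    intro y
    have := HasDerivAt.of_local_left_inverse hXc.continuousAt (hY _ (hXm y))
      (div_pos (hbp _ (hXm y)) (hqp _ (hXm y))).ne' (Eventually.of_forall hYX)
    rwa [inv_div] at this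
  refine ⟨X, fun y => q (X y), κ, hκ, ?_, fun y => ⟨hXm y, hqp _ (hXm y), hXd y, ?_,
    (H _ (hXm y)).1⟩⟩
  · rw [contDiff_infty]
    intro n
    induction n with
    | zero => simpa using hXc
    | succ n ih =>
      push_cast
      rw [contDiff_succ_iff_deriv]
      refine ⟨fun y => (hXd y).differentiableAt, by simp, ?_⟩
      have : deriv X = fun y => q (X y) / b (X y) := funext fun y => (hXd y).deriv
      rw [this]
      have hbn : ContDiffOn ℝ n b (Ioo 0 1) := contDiffOn_infty.1 hbs n
      exact ((hsm n).1.div hbn fun x hx => (hbp x hx).ne').comp_contDiff ih hXm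
  · refine ((hd _ (hXm y)).comp y (hXd y)).congr_deriv ?_
    have := hYX y
    simp only [Y] at this
    rw [show q1 (X y) = -(y/2) by linarith]

lemma flux_decay (X F b : ℝ → ℝ) (b1 : ℝ) (hF : ∀ y, 0 < F y) (hb : ∀ y, 0 < b (X y))
    (hb1 : ∀ y, b (X y) ≤ b1)
    (hd : ∀ y, HasDerivAt F (-(y / 2) * (F y / b (X y))) y) (y : ℝ) :
    F y ≤ F 0 * exp (-(1 / (4 * b1) * y ^ 2)) := by
  have hb1p : 0 < b1 := (hb 0).trans_le (hb1 0)
  set c := 1 / (4 * b1) with hc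
  have hW : ∀ y, HasDerivAt (fun y => F y * exp (c * y ^ 2))
      (F y * exp (c * y ^ 2) * (y / 2) * (1 / b1 - 1 / b (X y))) y := by
    intro y
    have h1 : HasDerivAt (fun y : ℝ => c * y ^ 2) (c * (2 * y)) y := by
      simpa using (hasDerivAt_pow 2 y).const_mul c
    refine ((hd y).mul h1.exp).congr_deriv ?_
    have := (hb y).ne'
    rw [hc]
    field_simp
    ring
  have hWc : Continuous (fun y => F y * exp (c * y ^ 2)) :=
    continuous_iff_continuousAt.2 fun y => (hW y).continuousAt
  have hWd : Differentiable ℝ (fun y => F y * exp (c * y ^ 2)) := fun y => (hW y).differentiableAt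
  have hneg : ∀ y, 1 / b1 - 1 / b (X y) ≤ 0 := fun y =>
    sub_nonpos.2 (one_div_le_one_div_of_le (hb y) (hb1 y))
  have key : F y * exp (c * y ^ 2) ≤ F 0 := by
    rcases le_total 0 y with hy | hy
    · have : AntitoneOn (fun y => F y * exp (c * y ^ 2)) (Ici 0) := by
        apply antitoneOn_of_deriv_nonpos (convex_Ici _) hWc.continuousOn hWd.differentiableOn
        intro z hz
        rw [interior_Ici] at hz
        rw [(hW z).deriv]
        have hz' : (0:ℝ) < z := hz
        have := hF z
        exact mul_nonpos_of_nonneg_of_nonpos (by positivity) (hneg z)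
      simpa using this (by simp) hy hy
    · have : MonotoneOn (fun y => F y * exp (c * y ^ 2)) (Iic 0) := by
        apply monotoneOn_of_deriv_nonneg (convex_Iic _) hWc.continuousOn hWd.differentiableOn
        intro z hz
        rw [interior_Iic] at hz
        rw [(hW z).deriv]
        have hz' : z < (0:ℝ) := hz
        exact mul_nonneg_of_nonpos_of_nonpos
          (mul_nonpos_of_nonneg_of_nonpos (mul_nonneg (hF z).le (exp_pos _).le) (by linarith))
          (hneg z)
      simpa using this hy (by simp) hy
  rw [exp_neg, ← div_eq_mul_inv, le_div_iff₀ (exp_pos _)]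
  exact key

set_option maxHeartbeats 1000000 in
theorem porous_medium_profile_exists
    (k γ α ρm ρp : ℝ) (hk : 0 < k) (hγ : 1 ≤ γ) (hα : 0 < α)
    (hρm : 0 < ρm) (hρp : 0 < ρp) :
    ∃ ρs : ℝ → ℝ, ContDiff ℝ (⊤ : ℕ∞) ρs ∧
      (∀ y : ℝ, 0 = (1/α) * deriv (deriv (fun z => k * ρs z ^ γ)) y + y / 2 * deriv ρs y) ∧
      Tendsto ρs atTop (nhds ρp) ∧ Tendsto ρs atBot (nhds ρm) ∧
      (Monotone ρs ∨ Antitone ρs) ∧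
      (∃ C > (0:ℝ), ∃ c > (0:ℝ), ∀ y : ℝ,
        |ρs y - rhoHat ρm ρp y| + |deriv ρs y| + |deriv (deriv ρs) y|
          ≤ C * |ρp - ρm| * Real.exp (-(c * α * y ^ 2))) ∧
      (∀ y : ℝ, min ρm ρp ≤ ρs y ∧ ρs y ≤ max ρm ρp) := by
  have hγ0 : 0 < γ := by linarith
  set L := ρp - ρm with hL
  let r : ℝ → ℝ := fun x => ρm + L * x
  have hrange : ∀ x ∈ Icc (0:ℝ) 1, min ρm ρp ≤ r x ∧ r x ≤ max ρm ρp := by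
    intro x hx
    have e : r x = (1 - x) * ρm + x * ρp := by simp only [r, hL]; ring
    have h1 : 0 ≤ 1 - x := by linarith [hx.2]
    have := mul_le_mul_of_nonneg_left (min_le_left ρm ρp) h1
    have := mul_le_mul_of_nonneg_left (min_le_right ρm ρp) hx.1
    have := mul_le_mul_of_nonneg_left (le_max_left ρm ρp) h1
    have := mul_le_mul_of_nonneg_left (le_max_right ρm ρp) hx.1
    rw [e]
    constructor <;> nlinarith
  have hrp : ∀ x ∈ Icc (0:ℝ) 1, 0 < r x := fun x hx =>
    (lt_min hρm hρp).trans_le (hrange x hx).1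
  have hrd : ∀ x, HasDerivAt r L x := fun x =>
    (((hasDerivAt_id x).const_mul L).const_add ρm).congr_deriv (mul_one L)
  have hrs : ContDiff ℝ (⊤ : ℕ∞) r := by simp only [r]; fun_prop
  have hrc : Continuous r := hrs.continuous
  let b : ℝ → ℝ := fun x => k * γ / α * r x ^ (γ - 1)
  let bd : ℝ → ℝ := fun x => k * γ / α * (L * (γ - 1) * r x ^ (γ - 1 - 1))
  have hbp : ∀ x ∈ Icc (0:ℝ) 1, 0 < b x := fun x hx => by
    have := rpow_pos_of_pos (hrp x hx) (γ - 1)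
    simp only [b]; positivity
  have hbd : ∀ x ∈ Icc (0:ℝ) 1, HasDerivAt b (bd x) x := fun x hx =>
    ((hrd x).rpow_const (Or.inl (hrp x hx).ne')).const_mul _
  have hbc : ContinuousOn b (Icc 0 1) := fun x hx => (hbd x hx).continuousAt.continuousWithinAt
  have hbdc : ContinuousOn bd (Icc 0 1) := by
    refine continuousOn_const.mul (continuousOn_const.mul ?_)
    exact hrc.continuousOn.rpow_const fun x hx => Or.inl (hrp x hx).ne'
  have hbs : ContDiffOn ℝ (⊤ : ℕ∞) b (Ioo 0 1) :=
    contDiffOn_const.mul (hrs.contDiffOn.rpow_const_of_ne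
      fun x hx => (hrp x (Ioo_subset_Icc_self hx)).ne')
  have hne : (Icc (0:ℝ) 1).Nonempty := ⟨0, by simp⟩
  obtain ⟨xm, hxm, hmin⟩ := isCompact_Icc.exists_isMinOn hne hbc
  obtain ⟨xM, hxM, hmax⟩ := isCompact_Icc.exists_isMaxOn hne hbc
  obtain ⟨B, hB⟩ := isCompact_Icc.exists_bound_of_continuousOn hbdc
  have hB0 : 0 ≤ B := (norm_nonneg _).trans (hB 0 (by simp))
  set b0 := b xm
  set b1 := b xM
  have hb0 : 0 < b0 := hbp xm hxm
  have hb1 : 0 < b1 := hbp xM hxM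
  obtain ⟨X, F, κ, hκ, hXs, H⟩ := exists_profile b b0 b1 hb0 hbs hbc
    (fun x hx => hmin hx) (fun x hx => hmax hx)
  have hXm : ∀ y, X y ∈ Ioo (0:ℝ) 1 := fun y => (H y).1
  have hXI : ∀ y, X y ∈ Icc (0:ℝ) 1 := fun y => Ioo_subset_Icc_self (hXm y)
  have hF : ∀ y, 0 < F y := fun y => (H y).2.1
  have hXd : ∀ y, HasDerivAt X (F y / b (X y)) y := fun y => (H y).2.2.1
  have hFd := fun y => (H y).2.2.2.1
  have hlow := fun y => (H y).2.2.2.2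
  have hbX : ∀ y, 0 < b (X y) := fun y => hbp _ (hXI y)
  have hbX0 : ∀ y, b0 ≤ b (X y) := fun y => hmin (hXI y)
  have hdec := flux_decay X F b b1 hF hbX (fun y => hmax (hXI y)) hFd
  have hXmono : Monotone X := monotone_of_deriv_nonneg (fun y => (hXd y).differentiableAt)
    fun y => by rw [(hXd y).deriv]; exact (div_pos (hF y) (hbX y)).le
  -- derivatives of the profile
  have hρd : ∀ y, HasDerivAt (fun y => r (X y)) (L * (F y / b (X y))) y := fun y =>
    (hrd (X y)).comp y (hXd y)
  have hρd' : deriv (fun y => r (X y)) = fun y => L * (F y / b (X y)) :=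
    funext fun y => (hρd y).deriv
  have hρdd : ∀ y, deriv (deriv (fun y => r (X y))) y =
      L * (-(y / 2) * F y / b (X y) ^ 2 - F y ^ 2 * bd (X y) / b (X y) ^ 3) := by
    intro y
    rw [hρd']
    have h1 : HasDerivAt (fun y => b (X y)) (bd (X y) * (F y / b (X y))) y :=
      (hbd _ (hXI y)).comp y (hXd y)
    have h2 := ((hFd y).div h1 (hbX y).ne').const_mul L
    refine h2.deriv.trans ?_
    have := (hbX y).ne'
    field_simp
  -- the main decay estimate
  set c0 := 1 / (4 * b1) with hc0
  have hc0p : 0 < c0 := by positivity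
  set m := min (X 0) (1 - X 0) with hm
  have hmp : 0 < m := lt_min (hXm 0).1 (by linarith [(hXm 0).2])
  set K1 := 1 / (κ * m) + 1 / b0 + 1 / (2 * b0 ^ 2) + F 0 * B / b0 ^ 3 with hK1
  have hF0 := hF 0
  have hK1p : 0 < K1 := by positivity
  have hF0le : ∀ y, F y ≤ F 0 := fun y => (hdec y).trans
    (mul_le_of_le_one_right hF0.le (exp_le_one_iff.2 (by
      have : 0 ≤ c0 * y ^ 2 := by positivity
      linarith)))
  have est1 : ∀ y, |r (X y) - rhoHat ρm ρp y| ≤ |L| * (F y * (1 / (κ * m))) := by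
    intro y
    have hx := hXm y
    have hl := hlow y
    have hx1 : 0 < 1 - X y := by linarith [hx.2]
    unfold rhoHat
    split_ifs with hy
    · have e : r (X y) - ρm = L * X y := by simp only [r]; ring
      rw [e, abs_mul, abs_of_pos hx.1]
      apply mul_le_mul_of_nonneg_left _ (abs_nonneg L)
      rw [mul_one_div, le_div_iff₀ (by positivity)]
      have h1 : m ≤ 1 - X y := (min_le_right _ _).trans (by linarith [hXmono hy.le])
      have h2 := mul_le_mul_of_nonneg_left h1 (mul_nonneg hκ.le hx.1.le)
      nlinarith
    · have e : r (X y) - ρp = -(L * (1 - X y)) := by simp only [r, hL]; ring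
      rw [e, abs_neg, abs_mul, abs_of_pos hx1]
      apply mul_le_mul_of_nonneg_left _ (abs_nonneg L)
      rw [mul_one_div, le_div_iff₀ (by positivity)]
      have h1 : m ≤ X y := (min_le_left _ _).trans (hXmono (not_lt.1 hy))
      have h2 := mul_le_mul_of_nonneg_left h1 (mul_nonneg hκ.le hx1.le)
      nlinarith
  have est2 : ∀ y, |deriv (fun y => r (X y)) y| ≤ |L| * (F y * (1 / b0)) := by
    intro y
    rw [(hρd y).deriv, abs_mul, abs_of_pos (div_pos (hF y) (hbX y)), div_eq_mul_one_div]
    have := hF y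
    gcongr
    exact hbX0 y
  have est3 : ∀ y, |deriv (deriv (fun y => r (X y))) y| ≤
      |L| * (F y * (|y| * (1 / (2 * b0 ^ 2)) + F 0 * B / b0 ^ 3)) := by
    intro y
    rw [hρdd, abs_mul]
    have hFy := hF y
    have hby := hbX y
    apply mul_le_mul_of_nonneg_left _ (abs_nonneg L)
    refine (abs_sub _ _).trans ?_
    have h1 : |-(y / 2) * F y / b (X y) ^ 2| ≤ F y * (|y| * (1 / (2 * b0 ^ 2))) := by
      rw [abs_div, abs_mul, abs_neg, abs_div, abs_of_pos hFy, abs_of_pos (pow_pos hby 2), abs_two]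
      calc |y| / 2 * F y / b (X y) ^ 2 ≤ |y| / 2 * F y / b0 ^ 2 := by
            gcongr
            exact hbX0 y
        _ = _ := by field_simp
    have h2 : |F y ^ 2 * bd (X y) / b (X y) ^ 3| ≤ F y * (F 0 * B / b0 ^ 3) := by
      rw [abs_div, abs_mul, abs_of_pos (pow_pos hFy 2), abs_of_pos (pow_pos hby 3)]
      have h3 : |bd (X y)| ≤ B := hB _ (hXI y)
      have h4 : F y ^ 2 ≤ F y * F 0 := by nlinarith [hF0le y]
      calc F y ^ 2 * |bd (X y)| / b (X y) ^ 3 ≤ (F y * F 0) * B / b0 ^ 3 := by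
            gcongr
            exact hbX0 y
        _ = _ := by ring
    linarith
  set K2 := 2 + 2 / c0 with hK2
  have hK2p : 0 < K2 := by positivity
  have hpoly : ∀ y : ℝ, 1 + |y| ≤ K2 * exp (c0 / 2 * y ^ 2) := by
    intro y
    have h1 := add_one_le_exp (c0 / 2 * y ^ 2)
    have h2 : 1 + |y| ≤ 2 + y ^ 2 := by
      nlinarith [sq_abs y, sq_nonneg (|y| - 1)]
    have h3 : 2 + y ^ 2 ≤ K2 * (c0 / 2 * y ^ 2 + 1) := by
      have e : K2 * (c0 / 2 * y ^ 2 + 1) = 2 + y ^ 2 + (c0 * y ^ 2 + 2 / c0) := by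
        rw [hK2]; field_simp; ring
      have : 0 ≤ c0 * y ^ 2 + 2 / c0 := by positivity
      linarith
    exact h2.trans (h3.trans (mul_le_mul_of_nonneg_left h1 hK2p.le))
  have main : ∀ y, |r (X y) - rhoHat ρm ρp y| + |deriv (fun y => r (X y)) y| +
      |deriv (deriv (fun y => r (X y))) y| ≤
      (K1 * F 0 * K2) * |L| * exp (-(c0 / 2 / α * α * y ^ 2)) := by
    intro y
    have hFy := hF y
    have h1 : |r (X y) - rhoHat ρm ρp y| + |deriv (fun y => r (X y)) y| +
      |deriv (deriv (fun y => r (X y))) y| ≤ |L| * (F y * (K1 * (1 + |y|))) := by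
      have s : |L| * (F y * (1 / (κ * m))) + |L| * (F y * (1 / b0)) +
          |L| * (F y * (|y| * (1 / (2 * b0 ^ 2)) + F 0 * B / b0 ^ 3)) ≤
          |L| * (F y * (K1 * (1 + |y|))) := by
        rw [← mul_add, ← mul_add, ← mul_add, ← mul_add]
        apply mul_le_mul_of_nonneg_left _ (abs_nonneg L)
        apply mul_le_mul_of_nonneg_left _ hFy.le
        have p1 : 0 ≤ (1 / (κ * m)) * |y| := by positivity
        have p2 : 0 ≤ (1 / b0) * |y| := by positivity
        have p3 : 0 ≤ 1 / (2 * b0 ^ 2) := by positivity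
        have p4 : 0 ≤ F 0 * B / b0 ^ 3 * |y| := by positivity
        rw [hK1]
        linarith
      linarith [est1 y, est2 y, est3 y]
    have h2 : F y * (1 + |y|) ≤ F 0 * K2 * exp (-(c0 / 2 * y ^ 2)) := by
      calc F y * (1 + |y|) ≤ (F 0 * exp (-(c0 * y ^ 2))) * (K2 * exp (c0 / 2 * y ^ 2)) :=
            mul_le_mul (hdec y) (hpoly y) (by positivity) (by positivity)
        _ = F 0 * K2 * (exp (-(c0 * y ^ 2)) * exp (c0 / 2 * y ^ 2)) := by ring
        _ = _ := by rw [← exp_add]; congr 2; ring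
    have e : c0 / 2 / α * α * y ^ 2 = c0 / 2 * y ^ 2 := by field_simp
    rw [e]
    have h3 := mul_le_mul_of_nonneg_left h2 (mul_nonneg (abs_nonneg L) hK1p.le)
    linarith
  have hexp : ∀ y : ℝ, exp (-(c0 / 2 / α * α * y ^ 2)) ≤ 1 / (1 + c0 / 2 * y ^ 2) := by
    intro y
    have e : c0 / 2 / α * α * y ^ 2 = c0 / 2 * y ^ 2 := by field_simp
    rw [e, exp_neg, ← one_div]
    apply one_div_le_one_div_of_le (by positivity)
    linarith [add_one_le_exp (c0 / 2 * y ^ 2)]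
  have lim : ∀ l : Filter ℝ, Tendsto (fun y : ℝ => y ^ 2) l atTop →
      Tendsto (fun y => r (X y) - rhoHat ρm ρp y) l (nhds 0) := by
    intro l hl
    have t : Tendsto (fun y : ℝ => (K1 * F 0 * K2) * |L| * (1 / (1 + c0 / 2 * y ^ 2))) l
        (nhds ((K1 * F 0 * K2) * |L| * 0)) := by
      apply Tendsto.const_mul
      simp only [one_div]
      apply Tendsto.inv_tendsto_atTop
      exact tendsto_atTop_add_const_left _ _ (hl.const_mul_atTop (by positivity))
    rw [mul_zero] at t
    refine squeeze_zero_norm (fun y => ?_) t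
    have h1 := main y
    have h2 := abs_nonneg (deriv (fun y => r (X y)) y)
    have h3 := abs_nonneg (deriv (deriv (fun y => r (X y))) y)
    have h4 := mul_le_mul_of_nonneg_left (hexp y)
      (by positivity : 0 ≤ (K1 * F 0 * K2) * |L|)
    rw [norm_eq_abs]
    linarith
  refine ⟨fun y => r (X y), hrs.comp hXs, ?_, ?_, ?_, ?_,
    ⟨K1 * F 0 * K2, by positivity, c0 / 2 / α, by positivity, main⟩, fun y => hrange _ (hXI y)⟩
  · intro y
    have h1 : deriv (fun z => k * r (X z) ^ γ) = fun z => α * L * F z := by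
      ext z
      have hr := hrp _ (hXI z)
      have d : HasDerivAt (fun z => k * r (X z) ^ γ)
          (k * (L * (F z / b (X z)) * γ * r (X z) ^ (γ - 1))) z :=
        ((hρd z).rpow_const (Or.inl hr.ne')).const_mul k
      rw [d.deriv]
      have hp := (rpow_pos_of_pos hr (γ - 1)).ne'
      simp only [b]
      field_simp
    rw [h1, ((hFd y).const_mul (α * L)).deriv, (hρd y).deriv]
    field_simp
    ring
  · have := lim atTop (tendsto_pow_atTop two_ne_zero)
    have h2 := this.add_const ρp
    rw [zero_add] at h2
    refine h2.congr' ?_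
    filter_upwards [eventually_ge_atTop 0] with y hy
    simp [rhoHat, not_lt.2 hy]
  · have := lim atBot (by
      have := (tendsto_pow_atTop (α := ℝ) two_ne_zero).comp tendsto_neg_atBot_atTop
      refine this.congr fun y => ?_
      simp)
    have h2 := this.add_const ρm
    rw [zero_add] at h2
    refine h2.congr' ?_
    filter_upwards [eventually_lt_atBot 0] with y hy
    simp [rhoHat, hy]
  · rcases le_total 0 L with h | h
    · left
      intro y z hyz
      have := mul_le_mul_of_nonneg_left (hXmono hyz) h
      simp only [r]; linarith
    · right
      intro y z hyz
      have := mul_le_mul_of_nonpos_left (hXmono hyz) h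
      simp only [r]; linarith
end
end

section
/- Properties of the energy potential under the improved pressure condition: Let p ∈ C([0,∞)) ∩ C¹((0,∞)) with p′ > 0 on (0,∞), and suppose there exists c > 0 with p′(z) ≤ c p(z)/z for all z > 0 and ∫₀¹ p(z)/z² dz < ∞. Define h(ρ) = ρ ∫₀^ρ p(z)/z² dz for ρ ≥ 0. Then h ∈ C¹([0,∞)) with h(0) = 0 and h′(0) = 0, h satisfies p(z) = z h′(z) − h(z) and h″(z) = p′(z)/z on (0,∞), and ρ h′(ρ) ≤ c h(ρ|0) for all ρ ≥ 0, where h(ρ|0) = h(ρ) − h(0) − h′(0)ρ = h(ρ). -/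
noncomputable section
open MeasureTheory Real Set Filter

/-- **Properties of the energy potential under the improved pressure condition.**
With `h(ρ) = ρ ∫₀^ρ p(z)/z² dz`, the potential `h` is `C¹` on `[0,∞)` with
`h(0) = h′(0) = 0`, satisfies `p(z) = z h′(z) − h(z)` and `h″(z) = p′(z)/z` on `(0,∞)`,
and `ρ h′(ρ) ≤ c h(ρ|0) = c h(ρ)` for all `ρ ≥ 0`. -/
theorem energy_potential_pres_better
    (p : ℝ → ℝ) (c : ℝ) (hc : 0 < c)
    (hp_cont : ContinuousOn p (Ici 0))
    (hp_diff : ∀ z > (0:ℝ), DifferentiableAt ℝ p z)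
    (hp_pos : ∀ z > (0:ℝ), 0 < deriv p z)
    (hpc : ∀ z > (0:ℝ), deriv p z ≤ c * p z / z)
    (hint : IntegrableOn (fun z => p z / z ^ 2) (Ioc (0:ℝ) 1))
    (h : ℝ → ℝ) (hdef : ∀ ρ : ℝ, h ρ = ρ * ∫ z in (0:ℝ)..ρ, p z / z ^ 2) :
    ∃ h' : ℝ → ℝ,
      ContinuousOn h' (Ici 0) ∧
      (∀ ρ ∈ Ici (0:ℝ), HasDerivWithinAt h (h' ρ) (Ici 0) ρ) ∧
      h 0 = 0 ∧ h' 0 = 0 ∧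
      (∀ z > (0:ℝ), p z = z * h' z - h z) ∧
      (∀ z > (0:ℝ), HasDerivAt h' (deriv p z / z) z) ∧
      (∀ ρ ≥ (0:ℝ), ρ * h' ρ ≤ c * h ρ) := by
  set g : ℝ → ℝ := fun z => p z / z ^ 2 with hg
  set F : ℝ → ℝ := fun ρ => ∫ z in (0:ℝ)..ρ, g z with hF
  have hF0 : F 0 = 0 := by simp [hF]
  have hpp : ∀ z > (0:ℝ), 0 < p z := by
    intro z hz
    have h1 := (hp_pos z hz).trans_le (hpc z hz)
    have h2 : 0 < c * p z := by
      have := mul_pos h1 hz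
      rwa [div_mul_cancel₀ _ hz.ne'] at this
    exact (pos_iff_pos_of_mul_pos h2).1 hc
  have hmono : MonotoneOn p (Ici 0) := by
    apply monotoneOn_of_deriv_nonneg (convex_Ici 0) hp_cont
    · intro x hx
      rw [interior_Ici] at hx
      exact (hp_diff x hx).differentiableWithinAt
    · intro x hx
      rw [interior_Ici] at hx
      exact (hp_pos x hx).le
  have hgc : ∀ z > (0:ℝ), ContinuousAt g z := by
    intro z hz
    exact (hp_diff z hz).continuousAt.div (by fun_prop) (by positivity)
  have hgi : ∀ a > (0:ℝ), ∀ b > (0:ℝ), IntervalIntegrable g volume a b := by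
    intro a ha b hb
    apply ContinuousOn.intervalIntegrable
    intro x hx
    exact (hgc x (lt_of_lt_of_le (lt_min ha hb) hx.1)).continuousWithinAt
  have hgi1 : IntervalIntegrable g volume 0 1 := by
    rw [intervalIntegrable_iff_integrableOn_Ioc_of_le zero_le_one]
    exact hint
  have hgi0 : ∀ b > (0:ℝ), IntervalIntegrable g volume 0 b := fun b hb =>
    hgi1.trans (hgi 1 one_pos b hb)
  have hFd : ∀ z > (0:ℝ), HasDerivAt F (g z) z := by
    intro z hz
    apply intervalIntegral.integral_hasDerivAt_right (hgi0 z hz) _ (hgc z hz)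
    exact ContinuousAt.stronglyMeasurableAtFilter isOpen_Ioi (fun x hx => hgc x hx) z hz
  have hFc0 : ContinuousWithinAt F (Ici 0) 0 := by
    have h1 : ContinuousOn F (Icc 0 1) := by
      have := intervalIntegral.continuousOn_primitive_interval (μ := volume) (f := g) (a := 0) (b := 1)
        (by rw [uIcc_of_le zero_le_one, integrableOn_Icc_iff_integrableOn_Ioc]; exact hint)
      rwa [uIcc_of_le zero_le_one] at this
    exact (h1 0 (by simp)).mono_of_mem_nhdsWithin (Icc_mem_nhdsGE one_pos)
  have hbound : ∀ z ≥ (0:ℝ), p z / z ≤ 4 * (F (2 * z) - F z) := by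
    intro z hz
    rcases hz.eq_or_lt with rfl | hz
    · simp
    have h2 : (0:ℝ) < 2 * z := by linarith
    have e : F (2 * z) - F z = ∫ x in z..(2 * z), g x :=
      intervalIntegral.integral_interval_sub_left (hgi0 _ h2) (hgi0 _ hz)
    have l : ∫ x in z..(2 * z), p z / (2 * z) ^ 2 ≤ ∫ x in z..(2 * z), g x := by
      apply intervalIntegral.integral_mono_on (by linarith) (by simp) (hgi _ hz _ h2)
      intro x hx
      have hx0 : 0 < x := lt_of_lt_of_le hz hx.1
      exact div_le_div₀ (hpp x hx0).le (hmono hz.le hx0.le hx.1) (by positivity)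
        (pow_le_pow_left₀ hx0.le hx.2 2)
    rw [intervalIntegral.integral_const, smul_eq_mul] at l
    have e2 : (2 * z - z) * (p z / (2 * z) ^ 2) = (p z / z) / 4 := by
      field_simp
      ring
    rw [e]
    linarith
  have hq : ContinuousWithinAt (fun z => p z / z) (Ici 0) 0 := by
    have hF2 : Tendsto (fun z => F (2 * z)) (nhdsWithin 0 (Ici 0)) (nhds 0) := by
      have h1 : Tendsto F (nhdsWithin 0 (Ici 0)) (nhds 0) := by
        simpa [ContinuousWithinAt, hF0] using hFc0
      apply h1.comp
      apply tendsto_nhdsWithin_of_tendsto_nhds_of_eventually_within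
      · have : Continuous (fun z : ℝ => 2 * z) := by fun_prop
        simpa using (this.tendsto 0).mono_left nhdsWithin_le_nhds
      · filter_upwards [self_mem_nhdsWithin] with z hz
        simp only [mem_Ici] at *
        linarith
    have h1 : Tendsto F (nhdsWithin 0 (Ici 0)) (nhds 0) := by
      simpa [ContinuousWithinAt, hF0] using hFc0
    have h3 : Tendsto (fun z => 4 * (F (2 * z) - F z)) (nhdsWithin 0 (Ici 0)) (nhds 0) := by
      simpa using (hF2.sub h1).const_mul 4
    unfold ContinuousWithinAt
    simp only [div_zero]
    apply squeeze_zero' _ _ h3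
    · filter_upwards [self_mem_nhdsWithin] with z hz
      rcases (show (0:ℝ) ≤ z from hz).eq_or_lt with rfl | hz
      · simp
      · exact (div_pos (hpp z hz) hz).le
    · filter_upwards [self_mem_nhdsWithin] with z hz
      exact hbound z hz
  have hd : ∀ z > (0:ℝ), HasDerivAt (fun z => F z + p z / z) (deriv p z / z) z := by
    intro z hz
    refine HasDerivAt.congr_deriv ((hFd z hz).add ((hp_diff z hz).hasDerivAt.div (hasDerivAt_id z) hz.ne')) ?_
    simp only [hg, id]
    field_simp
    ring
  have hcont : ContinuousOn (fun z => F z + p z / z) (Ici 0) := by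
    intro z hz
    rcases (show (0:ℝ) ≤ z from hz).eq_or_lt with rfl | hz
    · exact hFc0.add hq
    · exact (hd z hz).continuousAt.continuousWithinAt
  have hFcont : ContinuousOn F (Ici 0) := by
    intro z hz
    rcases (show (0:ℝ) ≤ z from hz).eq_or_lt with rfl | hz
    · exact hFc0
    · exact (hFd z hz).continuousAt.continuousWithinAt
  have hh : h = fun ρ => ρ * F ρ := funext hdef
  refine ⟨fun z => F z + p z / z, hcont, ?_, by simp [hh], by simp [hF0], ?_, hd, ?_⟩
  · intro z hz
    rcases (show (0:ℝ) ≤ z from hz).eq_or_lt with rfl | hz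
    · rw [hasDerivWithinAt_iff_tendsto_slope]
      have h1 : Tendsto F (nhdsWithin 0 (Ici 0 \ {0})) (nhds (F 0 + p 0 / 0)) := by
        rw [div_zero, add_zero]
        exact Tendsto.mono_left hFc0 (nhdsWithin_mono _ sdiff_subset)
      apply h1.congr'
      filter_upwards [self_mem_nhdsWithin] with z hz
      have hz0 : z ≠ 0 := hz.2
      simp [slope, hh, hz0]
    · rw [hh]
      apply HasDerivAt.hasDerivWithinAt
      refine HasDerivAt.congr_deriv ((hasDerivAt_id z).mul (hFd z hz)) ?_
      simp only [hg, id]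
      field_simp
  · intro z hz
    simp only [hh]
    field_simp
    ring
  · intro ρ hρ
    have hm : MonotoneOn (fun z => c * F z - (F z + p z / z)) (Ici 0) := by
      have hD : ∀ x > (0:ℝ), HasDerivAt (fun z => c * F z - (F z + p z / z))
          (c * g x - deriv p x / x) x := fun x hx =>
        ((hFd x hx).const_mul c).sub (hd x hx)
      apply monotoneOn_of_deriv_nonneg (convex_Ici 0) ((hFcont.const_mul c).sub hcont)
      · intro x hx
        rw [interior_Ici] at hx
        exact (hD x hx).differentiableAt.differentiableWithinAt
      · intro x hx
        rw [interior_Ici] at hx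
        have hx0 : 0 < x := hx
        refine le_of_le_of_eq ?_ (hD x hx).deriv.symm
        have := div_le_div_of_nonneg_right (hpc x hx) hx0.le
        have e : c * p x / x / x = c * g x := by
          simp only [hg]
          field_simp
        linarith
    have := hm (show (0:ℝ) ∈ Ici 0 by simp) hρ hρ
    simp only [hF0, div_zero] at this
    have h2 : F ρ + p ρ / ρ ≤ c * F ρ := by linarith
    calc ρ * (F ρ + p ρ / ρ) ≤ ρ * (c * F ρ) := mul_le_mul_of_nonneg_left h2 hρ
      _ = c * h ρ := by rw [hh]; ring
end
end

section
/- Bound for the error term ξ₂: Assume p(ρ) = kρ^γ with k > 0, γ ≥ 1. Let (ρ,n) ∈ L¹_loc((0,∞)×ℝ)² with ρ ≥ 0 a.e., and let (ρ̄,n̄) ∈ C¹((0,∞)×ℝ)² with inf ρ̄ > 0. Then pointwise a.e. the error term ξ₂ = e^{−τ} R̄ (ρ/ρ̄)(n/ρ − n̄/ρ̄), where R̄ = (n̄/ρ̄)R̄₁ − R̄₂ with R̄₁ = ρ̄_τ − (y/2)ρ̄_y + n̄_y and R̄₂ = n̄_τ − (y/2)n̄_y − (1/2)n̄ + (n̄²/ρ̄)_y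 + e^τ(p(ρ̄)_y + αn̄), satisfies |ξ₂| ≤ (|R̄|/(2kρ̄^γ) + 3|R̄|/(2ρ̄)) e^{−τ/2} η(τ;ρ,n|ρ̄,n̄) + e^{−τ/2}|R̄|. -/
noncomputable section
open MeasureTheory Real Set Filter

namespace DampedEuler

/-- Partial derivative in the first (time) variable. -/
def pd1 (f : ℝ → ℝ → ℝ) (τ y : ℝ) : ℝ := deriv (fun s => f s y) τ

/-- Partial derivative in the second (space) variable. -/
def pd2 (f : ℝ → ℝ → ℝ) (τ y : ℝ) : ℝ := deriv (f τ) y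

/-- Smooth compactly supported test functions on `ℝ × ℝ`. -/
def IsTest (φ : ℝ → ℝ → ℝ) : Prop :=
  ContDiff ℝ (⊤ : ℕ∞) (fun q : ℝ × ℝ => φ q.1 q.2) ∧
  HasCompactSupport (fun q : ℝ × ℝ => φ q.1 q.2)

/-- `C¹` compactly supported test functions on `ℝ`. -/
def IsTest1 (φ : ℝ → ℝ) : Prop := ContDiff ℝ 1 φ ∧ HasCompactSupport φ

/-- γ-law pressure. -/
def pGam (k γ : ℝ) (z : ℝ) : ℝ := k * z ^ γ

/-- Internal energy for the γ-law. -/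
def hGam (k γ : ℝ) (z : ℝ) : ℝ :=
  if γ = 1 then k * z * Real.log z else k / (γ - 1) * z ^ γ

/-- Relative internal energy. -/
def hRel (h : ℝ → ℝ) (ρ ρb : ℝ) : ℝ := h ρ - h ρb - deriv h ρb * (ρ - ρb)

/-- Relative entropy density. -/
def relEnt (h : ℝ → ℝ) (τ ρ n ρb nb : ℝ) : ℝ :=
  (1/2) * Real.exp (-τ) * ρ * (n / ρ - nb / ρb) ^ 2 + hRel h ρ ρb

/-- Relative entropy flux. -/
def relFlux (h : ℝ → ℝ) (τ ρ n ρb nb : ℝ) : ℝ :=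
  (1/2) * Real.exp (-τ) * n * (n / ρ - nb / ρb) ^ 2
    + ρ * (deriv h ρ - deriv h ρb) * (n / ρ - nb / ρb)
    + nb / ρb * hRel h ρ ρb

/-- Total relative entropy. -/
def totE (h : ℝ → ℝ) (τ : ℝ) (ρ n ρb nb : ℝ → ℝ) : ℝ :=
  ∫ y : ℝ, relEnt h τ (ρ y) (n y) (ρb y) (nb y)

/-- Finiteness of the total relative entropy. -/
def totEFin (h : ℝ → ℝ) (τ : ℝ) (ρ n ρb nb : ℝ → ℝ) : Prop :=
  Integrable (fun y : ℝ => relEnt h τ (ρ y) (n y) (ρb y) (nb y))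

/-- The step function `ρ̂`. -/
def rhoHat (ρm ρp : ℝ) (y : ℝ) : ℝ := if y < 0 then ρm else ρp

/-- Entropy density. -/
def entFn (h : ℝ → ℝ) (τ ρ n : ℝ) : ℝ := Real.exp (-τ) * n ^ 2 / (2 * ρ) + h ρ

/-- Entropy flux. -/
def entFlux (h : ℝ → ℝ) (τ ρ n : ℝ) : ℝ :=
  Real.exp (-τ) * n ^ 3 / (2 * ρ ^ 2) + n * deriv h ρ

/-- Weak solution of the scaled damped Euler system. -/
structure IsWeakSol (p : ℝ → ℝ) (α : ℝ) (ρ n : ℝ → ℝ → ℝ) (ρ₀ n₀ : ℝ → ℝ) : Prop where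
  loc_rho : LocallyIntegrableOn (fun q : ℝ × ℝ => ρ q.1 q.2) (Ici 0 ×ˢ univ)
  loc_n : LocallyIntegrableOn (fun q : ℝ × ℝ => n q.1 q.2) (Ici 0 ×ˢ univ)
  loc_kin : LocallyIntegrableOn (fun q : ℝ × ℝ => (n q.1 q.2) ^ 2 / ρ q.1 q.2) (Ici 0 ×ˢ univ)
  loc_p : LocallyIntegrableOn (fun q : ℝ × ℝ => p (ρ q.1 q.2)) (Ici 0 ×ˢ univ)
  rho_nonneg : ∀ᵐ q : ℝ × ℝ ∂(volume.restrict ((Ici 0) ×ˢ univ)), 0 ≤ ρ q.1 q.2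
  mass_eq : ∀ φ : ℝ → ℝ → ℝ, IsTest φ →
    -(∫ τ in Ioi (0:ℝ), ∫ y : ℝ,
        (pd1 φ τ y * ρ τ y + pd2 φ τ y * (-(y / 2) * ρ τ y + n τ y)
          - (1/2) * φ τ y * ρ τ y))
      = ∫ y : ℝ, φ 0 y * ρ₀ y
  mom_eq : ∀ ψ : ℝ → ℝ → ℝ, IsTest ψ →
    -(∫ τ in Ioi (0:ℝ), ∫ y : ℝ,
        (pd1 ψ τ y * n τ y
          + pd2 ψ τ y * (-(y / 2) * n τ y + (n τ y) ^ 2 / ρ τ y + Real.exp τ * p (ρ τ y))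
          - ψ τ y * Real.exp τ * α * n τ y))
      = ∫ y : ℝ, ψ 0 y * n₀ y

/-- Entropy condition (E1). -/
def CondE1 (h : ℝ → ℝ) (α : ℝ) (ρ n : ℝ → ℝ → ℝ) (ρ₀ n₀ : ℝ → ℝ) : Prop :=
  (∀ T > (0:ℝ), ∃ M : ℝ, ∀ᵐ q : ℝ × ℝ, q.1 ∈ Icc 0 T →
      |ρ q.1 q.2| ≤ M ∧ |n q.1 q.2 / ρ q.1 q.2| ≤ M) ∧
  LocallyIntegrableOn (fun q : ℝ × ℝ => h (ρ q.1 q.2)) (Ici 0 ×ˢ univ) ∧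
  ∀ χ : ℝ → ℝ → ℝ, IsTest χ → (∀ τ y, 0 ≤ χ τ y) →
    (∫ τ in Ioi (0:ℝ), ∫ y : ℝ,
        (-(pd1 χ τ y) * entFn h τ (ρ τ y) (n τ y)
          + pd2 χ τ y * (y / 2 * entFn h τ (ρ τ y) (n τ y) - entFlux h τ (ρ τ y) (n τ y))
          + χ τ y * ((1/2) * entFn h τ (ρ τ y) (n τ y) + α * (n τ y) ^ 2 / ρ τ y)))
      ≤ ∫ y : ℝ, χ 0 y * entFn h 0 (ρ₀ y) (n₀ y)

/-- A smoothened version of the step function. -/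
def IsRhoInf (ρm ρp : ℝ) (ρInf : ℝ → ℝ) : Prop :=
  ContDiff ℝ 1 ρInf ∧ ∃ R > (0:ℝ), (∀ y > R, ρInf y = ρp) ∧ ∀ y < -R, ρInf y = ρm

/-- Entropy condition (E2). -/
def CondE2 (h : ℝ → ℝ) (α ρm ρp : ℝ) (ρ n : ℝ → ℝ → ℝ) (ρ₀ n₀ : ℝ → ℝ) : Prop :=
  ∃ ρInf : ℝ → ℝ, IsRhoInf ρm ρp ρInf ∧
    ∀ φ : ℝ → ℝ, IsTest1 φ → (∀ τ, 0 ≤ φ τ) →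
      (∫ τ in Ioi (0:ℝ),
          (-(deriv φ τ) * totE h τ (ρ τ) (n τ) ρInf (fun _ => 0)
            + φ τ * ((1/2) * totE h τ (ρ τ) (n τ) ρInf (fun _ => 0)
              + ∫ y : ℝ, α * (n τ y) ^ 2 / ρ τ y)))
        ≤ φ 0 * totE h 0 ρ₀ n₀ ρInf (fun _ => 0)
          + ∫ τ in Ioi (0:ℝ), φ τ *
              ∫ y : ℝ, deriv (fun z => deriv h (ρInf z)) y * (y / 2 * (ρ τ y - ρInf y) - n τ y)

/-- First residual. -/
def R1 (ρb nb : ℝ → ℝ → ℝ) (τ y : ℝ) : ℝ :=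
  pd1 ρb τ y - y / 2 * pd2 ρb τ y + pd2 nb τ y

/-- Second residual. -/
def R2 (p : ℝ → ℝ) (α : ℝ) (ρb nb : ℝ → ℝ → ℝ) (τ y : ℝ) : ℝ :=
  pd1 nb τ y - y / 2 * pd2 nb τ y - (1/2) * nb τ y
    + pd2 (fun s z => (nb s z) ^ 2 / ρb s z) τ y
    + Real.exp τ * (pd2 (fun s z => p (ρb s z)) τ y + α * nb τ y)

/-- Combined residual. -/
def Rbar (p : ℝ → ℝ) (α : ℝ) (ρb nb : ℝ → ℝ → ℝ) (τ y : ℝ) : ℝ :=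
  nb τ y / ρb τ y * R1 ρb nb τ y - R2 p α ρb nb τ y

/-- Relative pressure. -/
def pRel (p : ℝ → ℝ) (ρ ρb : ℝ) : ℝ := p ρ - p ρb - deriv p ρb * (ρ - ρb)

/-- Error term `ξ₁`. -/
def xi1 (p : ℝ → ℝ) (ρ n ρb nb : ℝ → ℝ → ℝ) (τ y : ℝ) : ℝ :=
  -(pd2 (fun s z => nb s z / ρb s z) τ y) *
    (Real.exp (-τ) * ρ τ y * (n τ y / ρ τ y - nb τ y / ρb τ y) ^ 2
      + pRel p (ρ τ y) (ρb τ y))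

/-- Error term `ξ₂`. -/
def xi2 (p : ℝ → ℝ) (α : ℝ) (ρ n ρb nb : ℝ → ℝ → ℝ) (τ y : ℝ) : ℝ :=
  Real.exp (-τ) * Rbar p α ρb nb τ y * (ρ τ y / ρb τ y)
    * (n τ y / ρ τ y - nb τ y / ρb τ y)

/-- Error term `ξ₃`. -/
def xi3 (h : ℝ → ℝ) (ρ ρb nb : ℝ → ℝ → ℝ) (τ y : ℝ) : ℝ :=
  -(ρ τ y - ρb τ y) * deriv (deriv h) (ρb τ y) * R1 ρb nb τ y

/-- Total error term `ξ = ξ₁ + ξ₂ + ξ₃`. -/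
def xiTot (h p : ℝ → ℝ) (α : ℝ) (ρ n ρb nb : ℝ → ℝ → ℝ) (τ y : ℝ) : ℝ :=
  xi1 p ρ n ρb nb τ y + xi2 p α ρ n ρb nb τ y + xi3 h ρ ρb nb τ y

/-- Integrated error term `Ξ`. -/
def Xi (h p : ℝ → ℝ) (α : ℝ) (ρ n ρb nb : ℝ → ℝ → ℝ) (τ : ℝ) : ℝ :=
  ∫ y : ℝ, xiTot h p α ρ n ρb nb τ y

/-- Frictional dissipation term `D_α`. -/
def Dalpha (α : ℝ) (ρ n ρb nb : ℝ → ℝ) : ℝ :=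
  α * ∫ y : ℝ, ρ y * (n y / ρ y - nb y / ρb y) ^ 2

/-- Regularity of the reference pair: `C¹` on `(0,∞)×ℝ` and continuous on `[0,∞)×ℝ`. -/
def RefReg (ρb nb : ℝ → ℝ → ℝ) : Prop :=
  ContDiffOn ℝ 1 (fun q : ℝ × ℝ => ρb q.1 q.2) (Ioi 0 ×ˢ univ) ∧
  ContDiffOn ℝ 1 (fun q : ℝ × ℝ => nb q.1 q.2) (Ioi 0 ×ˢ univ) ∧
  ContinuousOn (fun q : ℝ × ℝ => ρb q.1 q.2) (Ici 0 ×ˢ univ) ∧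
  ContinuousOn (fun q : ℝ × ℝ => nb q.1 q.2) (Ici 0 ×ˢ univ)

/-- Membership in `L^∞_loc([0,∞); L¹(ℝ) ∩ L^∞(ℝ))`. -/
def LinfLocL1Linf (f : ℝ → ℝ → ℝ) : Prop :=
  ∀ T > (0:ℝ), ∃ M : ℝ, ∀ τ ∈ Icc (0:ℝ) T,
    Integrable (f τ) ∧ (∫ y : ℝ, |f τ y|) ≤ M ∧ ∀ y, |f τ y| ≤ M

/-- The improved pressure condition `(eq:pres.better)`. -/
def PresBetter (p : ℝ → ℝ) : Prop :=
  (∃ c > (0:ℝ), ∀ z > (0:ℝ), deriv p z ≤ c * p z / z) ∧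
  IntegrableOn (fun z => p z / z ^ 2) (Ioc (0:ℝ) 1)

/-- The global relative entropy inequality `(eq:relent.total.weak)`. -/
def RelEntIneq (h p : ℝ → ℝ) (α : ℝ) (ρ n ρb nb : ℝ → ℝ → ℝ) (ρ₀ n₀ : ℝ → ℝ) : Prop :=
  ∀ φ : ℝ → ℝ, IsTest1 φ → (∀ τ, 0 ≤ φ τ) →
    (∫ τ in Ioi (0:ℝ),
        (-(deriv φ τ) * totE h τ (ρ τ) (n τ) (ρb τ) (nb τ)
          + φ τ * ((1/2) * totE h τ (ρ τ) (n τ) (ρb τ) (nb τ)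
            + Dalpha α (ρ τ) (n τ) (ρb τ) (nb τ))))
      ≤ φ 0 * totE h 0 ρ₀ n₀ (ρb 0) (nb 0)
        + ∫ τ in Ioi (0:ℝ), φ τ * Xi h p α ρ n ρb nb τ


/-- Lower bound for the relative internal energy. -/
lemma hRel_lower (k γ b s : ℝ) (hk : 0 < k) (hγ : 1 ≤ γ) (hb : 0 < b) (hs : 0 ≤ s) :
    k * b ^ γ * (s - 1) ^ 2 ≤ hRel (hGam k γ) (s ^ 2 * b) b := by
  rcases eq_or_lt_of_le hγ with h1 | h1
  · subst h1
    have hfun : hGam k 1 = fun z => k * z * Real.log z := by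
      funext z; simp [hGam]
    have hd : deriv (hGam k 1) b = k * (Real.log b + 1) := by
      rw [hfun]
      have h := (((hasDerivAt_id b).const_mul k).mul (Real.hasDerivAt_log hb.ne'))
      have h2 : HasDerivAt (fun z => k * z * Real.log z) (k * 1 * Real.log b + k * b * b⁻¹) b := h
      rw [h2.deriv]
      field_simp
    unfold hRel
    rw [hd, hfun]
    simp only [Real.rpow_one]
    rcases hs.eq_or_lt with h0 | h0
    · subst h0
      simp
      nlinarith [mul_pos hk hb]
    · rw [Real.log_mul (by positivity) hb.ne', Real.log_pow]
      have hl := Real.one_sub_inv_le_log_of_pos h0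
      have hl2 : s * (s - 1) ≤ s ^ 2 * Real.log s := by
        have := mul_le_mul_of_nonneg_left hl (sq_nonneg s)
        have e : s ^ 2 * (1 - s⁻¹) = s * (s - 1) := by field_simp
        linarith
      have hkb := mul_pos hk hb
      have := mul_le_mul_of_nonneg_left hl2 hkb.le
      push_cast
      nlinarith
  · have hne : γ ≠ 1 := h1.ne'
    have hg : 0 < γ - 1 := by linarith
    have hfun : hGam k γ = fun z => k / (γ - 1) * z ^ γ := by
      funext z; simp [hGam, hne]
    have hd : deriv (hGam k γ) b = k / (γ - 1) * (γ * b ^ (γ - 1)) := by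
      rw [hfun]
      exact ((Real.hasDerivAt_rpow_const (Or.inl hb.ne')).const_mul _).deriv
    have hbb : b ^ (γ - 1) * b = b ^ γ := by
      rw [Real.rpow_sub_one hb.ne']; field_simp
    have hB := one_add_mul_self_le_rpow_one_add (s := s - 1) (by linarith)
      (p := 2 * γ - 1) (by linarith)
    rw [add_sub_cancel] at hB
    have hsp : (s ^ 2) ^ γ = s * s ^ (2 * γ - 1) := by
      rw [← Real.rpow_natCast, ← Real.rpow_mul hs]
      rcases hs.eq_or_lt with h0 | h0
      · subst h0
        rw [Real.zero_rpow (by push_cast; linarith)]; simp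
      · rw [Real.rpow_sub_one h0.ne']; push_cast; field_simp
    have hB2 := mul_le_mul_of_nonneg_left hB hs
    rw [← hsp] at hB2
    unfold hRel
    rw [hd, hfun]
    simp only
    rw [Real.mul_rpow (by positivity) hb.le]
    have hP : 0 < k / (γ - 1) * b ^ γ := by positivity
    have hB3 := mul_le_mul_of_nonneg_left hB2 hP.le
    have e1 : k * b ^ γ * (s - 1) ^ 2 = k / (γ - 1) * b ^ γ * ((γ - 1) * (s - 1) ^ 2) := by
      field_simp
    have e2 : k / (γ - 1) * (γ * b ^ (γ - 1)) * (s ^ 2 * b - b)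
        = k / (γ - 1) * b ^ γ * (γ * (s ^ 2 - 1)) := by
      rw [← hbb]; ring
    rw [e1, e2]
    nlinarith

/-- Pointwise bound. -/
lemma pointwise_bound (k γ : ℝ) (hk : 0 < k) (hγ : 1 ≤ γ) (τ r m B N R : ℝ) (hr : 0 ≤ r)
    (hB : 0 < B) :
    |Real.exp (-τ) * R * (r / B) * (m / r - N / B)|
      ≤ (|R| / (2 * k * B ^ γ) + 3 * |R| / (2 * B)) * Real.exp (-τ / 2)
          * relEnt (hGam k γ) τ r m B N + Real.exp (-τ / 2) * |R| := by
  obtain ⟨s, hs, hsr⟩ : ∃ s : ℝ, 0 ≤ s ∧ s ^ 2 * B = r :=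
    ⟨√(r / B), Real.sqrt_nonneg _, by rw [Real.sq_sqrt (by positivity)]; field_simp⟩
  have hH := hRel_lower k γ B s hk hγ hB hs
  rw [hsr] at hH
  unfold relEnt
  have hrB : r / B = s ^ 2 := by rw [← hsr]; field_simp
  rw [hrB]
  generalize m / r - N / B = v
  have hee : Real.exp (-τ) = Real.exp (-τ / 2) * Real.exp (-τ / 2) := by
    rw [← Real.exp_add]; congr 1; ring
  rw [hee]
  have he : 0 < Real.exp (-τ / 2) := Real.exp_pos _
  generalize Real.exp (-τ / 2) = e at *
  generalize hRel (hGam k γ) r B = H at *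
  have hP : 0 < B ^ γ := Real.rpow_pos_of_pos hB γ
  generalize B ^ γ = P at *
  have hH0 : 0 ≤ H := le_trans (by positivity) hH
  set W := s * (e * |v|) with hW
  have hW0 : 0 ≤ W := by positivity
  have habs : |e * e * R * s ^ 2 * v| = e * |R| * (s * W) := by
    rw [abs_mul, abs_mul, abs_mul, abs_of_pos (mul_pos he he), abs_of_nonneg (sq_nonneg s), hW]
    ring
  have hkin : 1 / 2 * (e * e) * r * v ^ 2 = 1 / 2 * B * W ^ 2 := by
    rw [hW, mul_pow, mul_pow, sq_abs, ← hsr]; ring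
  rw [habs, hkin]
  have h1 : (s - 1) ^ 2 / 2 ≤ 1 / (2 * k * P) * H := by
    rw [div_mul_eq_mul_div, div_le_div_iff₀ (by norm_num) (by positivity)]
    nlinarith
  have h2 : 3 / (2 * B) * (1 / 2 * B * W ^ 2) = 3 / 4 * W ^ 2 := by
    field_simp; ring
  have h3 : 0 ≤ 3 / (2 * B) * H := by positivity
  have h4 : 0 ≤ 1 / (2 * k * P) * (1 / 2 * B * W ^ 2) := by positivity
  have key : s * W ≤ (1 / (2 * k * P) + 3 / (2 * B)) * (1 / 2 * B * W ^ 2 + H) + 1 := by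
    nlinarith [sq_nonneg (s - 1 - W), sq_nonneg (W / 2 - 1)]
  calc e * |R| * (s * W)
      ≤ e * |R| * ((1 / (2 * k * P) + 3 / (2 * B)) * (1 / 2 * B * W ^ 2 + H) + 1) :=
        mul_le_mul_of_nonneg_left key (by positivity)
    _ = _ := by ring

/-- **Bound for the error term `ξ₂`.** -/
theorem xi2_bound
    (k γ α : ℝ) (hk : 0 < k) (hγ : 1 ≤ γ) (hα : 0 ≤ α)
    (ρ n : ℝ → ℝ → ℝ)
    (hρloc : LocallyIntegrableOn (fun q : ℝ × ℝ => ρ q.1 q.2) (Ioi 0 ×ˢ univ))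
    (hnloc : LocallyIntegrableOn (fun q : ℝ × ℝ => n q.1 q.2) (Ioi 0 ×ˢ univ))
    (hρpos : ∀ᵐ q : ℝ × ℝ ∂(volume.restrict (Ioi 0 ×ˢ univ)), 0 ≤ ρ q.1 q.2)
    (ρb nb : ℝ → ℝ → ℝ)
    (hρbC1 : ContDiffOn ℝ 1 (fun q : ℝ × ℝ => ρb q.1 q.2) (Ioi 0 ×ˢ univ))
    (hnbC1 : ContDiffOn ℝ 1 (fun q : ℝ × ℝ => nb q.1 q.2) (Ioi 0 ×ˢ univ))
    (hρbinf : ∃ ε > (0:ℝ), ∀ τ y : ℝ, ε ≤ ρb τ y) :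
    ∀ᵐ q : ℝ × ℝ ∂(volume.restrict (Ioi 0 ×ˢ univ)),
      |xi2 (pGam k γ) α ρ n ρb nb q.1 q.2|
        ≤ (|Rbar (pGam k γ) α ρb nb q.1 q.2| / (2 * k * ρb q.1 q.2 ^ γ)
            + 3 * |Rbar (pGam k γ) α ρb nb q.1 q.2| / (2 * ρb q.1 q.2))
            * Real.exp (-q.1 / 2)
            * relEnt (hGam k γ) q.1 (ρ q.1 q.2) (n q.1 q.2) (ρb q.1 q.2) (nb q.1 q.2)
          + Real.exp (-q.1 / 2) * |Rbar (pGam k γ) α ρb nb q.1 q.2| := by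
  obtain ⟨ε, hε, hεb⟩ := hρbinf
  filter_upwards [hρpos] with q hq
  exact pointwise_bound k γ hk hγ q.1 _ _ _ _ _ hq (lt_of_lt_of_le hε (hεb _ _))

end DampedEuler
end
end

section
/- Generalized Gronwall inequality in variational form: Let E₀ ∈ ℝ and let E, a, b ∈ L¹_loc([0,∞)) be such that τ ↦ a(τ)E(τ) belongs to L¹_loc([0,∞)), and assume that ∫₀^∞ −φ′(τ)E(τ) dτ ≤ E₀ φ(0) + ∫₀^∞ φ(τ)(a(τ)E(τ) + b(τ)) dτ for all nonnegative φ ∈ C¹_c([0,∞)). Then E(τ) ≤ E₀ e^{∫₀^τ a(ν) dν} + ∫₀^τ b(σ) e^{∫_σ^τ a(ν) dν} dσ for almost all τ > 0. -/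
noncomputable section
open MeasureTheory Real Set Filter

lemma gv_approx (g E : ℝ → ℝ) (S : Set ℝ) (hg : Integrable g)
    (hE : IntegrableOn E S) (hgE : IntegrableOn (fun t => g t * E t) S) {ε : ℝ} (hε : 0 < ε) :
    ∃ ψ : ℝ → ℝ, Continuous ψ ∧ Integrable ψ ∧ (∫ t, ‖g t - ψ t‖) ≤ ε ∧
      IntegrableOn (fun t => (g t - ψ t) * E t) S ∧
      (∫ t in S, ‖(g t - ψ t) * E t‖) ≤ ε := by
  let ν : Measure ℝ := (volume.restrict S).withDensity (fun t => ‖E t‖ₑ)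
  have hEm : AEMeasurable (fun t => ‖E t‖ₑ) (volume.restrict S) := hE.1.enorm
  have : IsFiniteMeasure ν := by
    refine ⟨?_⟩
    simp only [ν, withDensity_apply _ MeasurableSet.univ, Measure.restrict_univ]
    exact hE.2
  let μ : Measure ℝ := volume + ν
  have : IsFiniteMeasureOnCompacts μ := ⟨fun K hK => by
    simp only [μ, Measure.add_apply]
    exact ENNReal.add_lt_top.2 ⟨hK.measure_lt_top, hK.measure_lt_top⟩⟩
  have hac : ν ≪ volume :=
    (withDensity_absolutelyContinuous _ _).trans Measure.absolutelyContinuous_restrict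
  have hν : ∀ f : ℝ → ℝ, AEStronglyMeasurable f volume →
      ∫⁻ t, ‖f t‖ₑ ∂ν = ∫⁻ t in S, ‖f t * E t‖ₑ := by
    intro f hf
    simp only [ν]
    rw [lintegral_withDensity_eq_lintegral_mul₀ hEm (hf.restrict.enorm)]
    refine lintegral_congr fun t => ?_
    simp [mul_comm]
  have hgμ : Integrable g μ := by
    refine Integrable.add_measure hg ⟨hg.1.mono_ac hac, ?_⟩
    rw [hasFiniteIntegral_iff_enorm, hν g hg.1]
    exact hgE.2
  obtain ⟨ψ, -, h1, h2, h3⟩ := hgμ.exists_hasCompactSupport_lintegral_sub_le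
    (ε := ENNReal.ofReal ε) (by simpa using hε)
  have hψ : Integrable ψ := h3.mono_measure (Measure.le_add_right le_rfl)
  have hd : AEStronglyMeasurable (fun t => g t - ψ t) volume := hg.1.sub hψ.1
  rw [lintegral_add_measure, hν (fun t => g t - ψ t) hd] at h1
  have h4 : ∫⁻ t in S, ‖(g t - ψ t) * E t‖ₑ ≤ ENNReal.ofReal ε := le_trans le_add_self h1
  refine ⟨ψ, h2, hψ, ?_, ⟨hd.restrict.mul hE.1, ?_⟩, ?_⟩
  · rw [integral_norm_eq_lintegral_enorm hd]
    exact ENNReal.toReal_le_of_le_ofReal hε.le (le_trans le_self_add h1)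
  · exact lt_of_le_of_lt h4 ENNReal.ofReal_lt_top
  · have hm : AEStronglyMeasurable (fun t => (g t - ψ t) * E t) (volume.restrict S) :=
      hd.restrict.mul hE.1
    rw [integral_norm_eq_lintegral_enorm hm]
    exact ENNReal.toReal_le_of_le_ofReal hε.le h4

lemma gv_ac_exp {A : ℝ → ℝ} {x y : ℝ} (hA : AbsolutelyContinuousOnInterval A x y) :
    AbsolutelyContinuousOnInterval (fun t => Real.exp (- A t)) x y := by
  obtain ⟨C, hC⟩ := hA.exists_bound
  obtain ⟨K, hK⟩ := (Real.contDiff_exp (n := 1)).contDiffOn.exists_lipschitzOnWith (s := Icc (-C) C)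
    (by decide) (convex_Icc _ _) isCompact_Icc
  have key : ∀ s ∈ uIcc x y, ∀ t ∈ uIcc x y,
      dist (Real.exp (- A s)) (Real.exp (- A t)) ≤ K * dist (A s) (A t) := by
    intro s hs t ht
    have h1 := abs_le.1 (hC s hs)
    have h2 := abs_le.1 (hC t ht)
    have := hK.dist_le_mul (- A s) ⟨by linarith, by linarith⟩ (- A t) ⟨by linarith, by linarith⟩
    simpa using this
  rw [absolutelyContinuousOnInterval_iff] at hA ⊢
  intro ε hε
  obtain ⟨δ, hδ, h⟩ := hA (ε / (K + 1)) (by positivity)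
  refine ⟨δ, hδ, fun I hI hI2 => ?_⟩
  have h3 := h I hI hI2
  calc _ ≤ ∑ i ∈ Finset.range I.1, (K:ℝ) * dist (A (I.2 i).1) (A (I.2 i).2) := by
        refine Finset.sum_le_sum fun i hi => ?_
        have := hI.1 i hi
        exact key _ this.1 _ this.2
    _ = K * ∑ i ∈ Finset.range I.1, dist (A (I.2 i).1) (A (I.2 i).2) := by rw [Finset.mul_sum]
    _ ≤ (K + 1) * ∑ i ∈ Finset.range I.1, dist (A (I.2 i).1) (A (I.2 i).2) := by
        gcongr; linarith
    _ < (K + 1) * (ε / (K + 1)) := by gcongr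
    _ = ε := by field_simp

lemma gv_key (E₀ : ℝ) (E F g : ℝ → ℝ) (T : ℝ) (hT : 0 < T)
    (hE : LocallyIntegrableOn E (Ici 0)) (hF : LocallyIntegrableOn F (Ici 0))
    (hineq : ∀ φ : ℝ → ℝ, ContDiff ℝ 1 φ → HasCompactSupport φ → (∀ τ, 0 ≤ φ τ) →
      (∫ τ in Ioi (0:ℝ), -(deriv φ τ) * E τ)
        ≤ E₀ * φ 0 + ∫ τ in Ioi (0:ℝ), φ τ * F τ)
    (hg : Integrable g) (hg0 : ∀ t, t ∉ Ioc 0 T → g t = 0)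
    (hgE : IntegrableOn (fun t => g t * E t) (Ioi 0))
    (hP : ∀ t, 0 ≤ ∫ s in t..T, g s) :
    (∫ τ in Ioi (0:ℝ), g τ * E τ)
      ≤ E₀ * (∫ s in (0:ℝ)..T, g s) + ∫ τ in Ioi (0:ℝ), (∫ s in τ..T, g s) * F τ := by
  let κ : ContDiffBump (0:ℝ) := ⟨T + 1, T + 2, by linarith, by linarith⟩
  set P : ℝ → ℝ := fun t => ∫ s in t..T, g s with hPdef
  have hκ1 : ∀ t, 0 < t → t ≤ T → κ t = 1 := fun t h0 h1 =>
    κ.one_of_mem_closedBall (by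
      rw [Metric.mem_closedBall, Real.dist_eq, sub_zero, abs_of_pos h0]
      change t ≤ T + 1; linarith)
  have hκ'1 : ∀ t, 0 < t → t ≤ T → deriv κ t = 0 := fun t h0 h1 => by
    have : (κ : ℝ → ℝ) =ᶠ[nhds t] fun _ => 1 := κ.eventuallyEq_one_of_mem_ball (by
      rw [Metric.mem_ball, Real.dist_eq, sub_zero, abs_of_pos h0]
      change t < T + 1; linarith)
    rw [this.deriv_eq]; simp
  have hκC : ContDiff ℝ 1 (κ : ℝ → ℝ) := κ.contDiff
  have hκ' : Continuous (deriv (κ : ℝ → ℝ)) := hκC.continuous_deriv le_rfl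
  obtain ⟨C, hC⟩ := hκ'.bounded_above_of_compact_support κ.hasCompactSupport.deriv
  have hC0 : 0 ≤ C := (norm_nonneg _).trans (hC 0)
  have hP0 : ∀ t, T < t → P t = 0 := by
    intro t ht
    simp only [hPdef]
    rw [intervalIntegral.integral_symm, neg_eq_zero]
    refine intervalIntegral.integral_zero_ae (Eventually.of_forall fun s hs => hg0 s ?_)
    rw [uIoc_of_le ht.le] at hs
    exact fun h => absurd h.2 (not_le.2 hs.1)
  have hPc : Continuous P := by
    have : P = fun t => - ∫ s in T..t, g s := by
      ext t; exact intervalIntegral.integral_symm _ _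
    rw [this]
    exact (intervalIntegral.continuous_primitive (fun _ _ => hg.intervalIntegrable) T).neg
  set S : Set ℝ := Ioc 0 (T + 2) with hS
  have hSI : S ⊆ Icc 0 (T + 2) := Ioc_subset_Icc_self
  have hIE : IntegrableOn E (Icc 0 (T + 2)) :=
    hE.integrableOn_compact_subset Icc_subset_Ici_self isCompact_Icc
  have hIF : IntegrableOn F (Icc 0 (T + 2)) :=
    hF.integrableOn_compact_subset Icc_subset_Ici_self isCompact_Icc
  have hIg : IntegrableOn (fun t => g t * E t) S := hgE.mono_set Ioc_subset_Ioi_self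
  have hcE : ∀ f : ℝ → ℝ, Continuous f → IntegrableOn (fun t => f t * E t) S := fun f hf =>
    (hIE.continuousOn_mul hf.continuousOn isCompact_Icc).mono_set hSI
  have hcF : ∀ f : ℝ → ℝ, Continuous f → IntegrableOn (fun t => f t * F t) S := fun f hf =>
    (hIF.continuousOn_mul hf.continuousOn isCompact_Icc).mono_set hSI
  -- restriction to S
  have hres : ∀ f : ℝ → ℝ, (∀ t, T + 2 < t → f t = 0) →
      ∫ t in Ioi (0:ℝ), f t = ∫ t in S, f t := by
    intro f hf
    refine (setIntegral_eq_of_subset_of_forall_sdiff_eq_zero measurableSet_Ioi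
      Ioc_subset_Ioi_self fun t ht => hf t ?_)
    by_contra h
    exact ht.2 ⟨ht.1, not_lt.1 h⟩
  set M : ℝ := 1 + 2 * C * (∫ t in S, ‖E t‖) + 2 * |E₀| + 2 * ∫ t in S, ‖F t‖ with hM
  have main : ∀ ε : ℝ, 0 < ε → (∫ τ in Ioi (0:ℝ), g τ * E τ)
      ≤ E₀ * P 0 + (∫ τ in Ioi (0:ℝ), P τ * F τ) + ε * M := by
    intro ε hε
    obtain ⟨ψ, hψc, hψi, hψ1, hψ2, hψ3⟩ := gv_approx g E S hg (hIE.mono_set hSI) hIg hε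
    set Ψ : ℝ → ℝ := fun t => ∫ s in t..T, ψ s with hΨ
    have hΨP : ∀ t, |Ψ t - P t| ≤ ε := by
      intro t
      have : P t - Ψ t = ∫ s in t..T, (g s - ψ s) := by
        rw [intervalIntegral.integral_sub hg.intervalIntegrable hψi.intervalIntegrable]
      rw [abs_sub_comm, this, ← Real.norm_eq_abs]
      refine (intervalIntegral.norm_integral_le_integral_norm_uIoc).trans (le_trans ?_ hψ1)
      exact setIntegral_le_integral (hg.sub hψi).norm (Eventually.of_forall fun _ => norm_nonneg _)
    have hΨd : ∀ t, HasDerivAt Ψ (- ψ t) t := fun t =>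
      intervalIntegral.integral_hasDerivAt_left hψi.intervalIntegrable
        (hψc.stronglyMeasurableAtFilter _ _) hψc.continuousAt
    have hΨC : ContDiff ℝ 1 Ψ := by
      rw [contDiff_one_iff_deriv]
      refine ⟨fun t => (hΨd t).differentiableAt, ?_⟩
      rw [show deriv Ψ = fun t => - ψ t from funext fun t => (hΨd t).deriv]
      exact hψc.neg
    set φ : ℝ → ℝ := fun t => κ t * (ε + Ψ t) with hφ
    have hφd : ∀ t, deriv φ t = deriv κ t * (ε + Ψ t) - κ t * ψ t := fun t => by
      have := ((hκC.differentiable one_ne_zero) t).hasDerivAt.mul ((hΨd t).const_add ε)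
      rw [show φ = (κ : ℝ → ℝ) * (fun t => ε + Ψ t) from rfl, this.deriv]; ring
    have hφC : ContDiff ℝ 1 φ := hκC.mul (contDiff_const.add hΨC)
    have hφs : HasCompactSupport φ := κ.hasCompactSupport.mul_right
    have hφ0 : ∀ t, 0 ≤ φ t := fun t => by
      refine mul_nonneg κ.nonneg ?_
      have := (abs_le.1 (hΨP t)).1
      have h2 : 0 ≤ P t := hP t
      linarith
    have hout : ∀ t, T + 2 < t → t ∉ tsupport κ := by
      intro t ht h
      rw [κ.tsupport_eq, Metric.mem_closedBall, Real.dist_eq, sub_zero] at h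
      have h' : |t| ≤ T + 2 := h
      linarith [le_abs_self t]
    have hκ0 : ∀ t, T + 2 < t → κ t = 0 := fun t ht => image_eq_zero_of_notMem_tsupport (hout t ht)
    have hκ'0 : ∀ t, T + 2 < t → deriv κ t = 0 := fun t ht => by
      by_contra h
      exact hout t ht (support_deriv_subset h)
    have h := hineq φ hφC hφs hφ0
    have e1 : ∀ t ∈ S, g t * E t - (-(deriv φ t) * E t) =
        κ t * ((g t - ψ t) * E t) + deriv κ t * (ε + (Ψ t - P t)) * E t := by
      intro t ht
      rw [hφd]
      rcases le_or_gt t T with h1 | h1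
      · rw [hκ1 t ht.1 h1, hκ'1 t ht.1 h1]; ring
      · rw [hg0 t (fun h => absurd h.2 (not_le.2 h1)), hP0 t h1]; ring
    have e2 : ∀ t ∈ S, φ t * F t - P t * F t = κ t * (ε + (Ψ t - P t)) * F t := by
      intro t ht
      simp only [hφ]
      rcases le_or_gt t T with h1 | h1
      · rw [hκ1 t ht.1 h1]; ring
      · rw [hP0 t h1]; ring
    have hb : ∀ t, |ε + (Ψ t - P t)| ≤ 2 * ε := fun t => by
      have := abs_le.1 (hΨP t)
      rw [abs_le]; constructor <;> linarith
    have hk : ∀ t, |κ t| ≤ 1 := fun t => by rw [abs_of_nonneg κ.nonneg]; exact κ.le_one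
    have hφ'E : IntegrableOn (fun t => -(deriv φ t) * E t) S :=
      hcE _ (hφC.continuous_deriv le_rfl).neg
    have i1 : (∫ t in S, g t * E t) - (∫ t in S, -(deriv φ t) * E t)
        ≤ ε + 2 * C * ε * ∫ t in S, ‖E t‖ := by
      have hIEn : IntegrableOn (fun t => ‖E t‖) S := (hIE.mono_set hSI).norm
      rw [← integral_sub hIg hφ'E, ← integral_const_mul]
      refine le_trans ?_ (add_le_add_left hψ3 _)
      rw [← integral_add hψ2.norm (hIEn.const_mul _)]
      refine setIntegral_mono_on (hIg.sub hφ'E) (hψ2.norm.add (hIEn.const_mul _))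
        measurableSet_Ioc fun t ht => ?_
      rw [e1 t ht]
      refine add_le_add ?_ ?_
      · refine (le_abs_self _).trans ?_
        rw [abs_mul, Real.norm_eq_abs]
        exact mul_le_of_le_one_left (abs_nonneg _) (hk t)
      · refine (le_abs_self _).trans ?_
        rw [abs_mul, abs_mul, Real.norm_eq_abs]
        have h1 : |deriv κ t| ≤ C := hC t
        have h2 := hb t
        have : |deriv κ t| * |ε + (Ψ t - P t)| ≤ C * (2 * ε) := by gcongr
        nlinarith [abs_nonneg (E t)]
    have i2 : (∫ t in S, φ t * F t) - (∫ t in S, P t * F t) ≤ 2 * ε * ∫ t in S, ‖F t‖ := by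
      have hIFn : IntegrableOn (fun t => ‖F t‖) S := (hIF.mono_set hSI).norm
      have a1 := hcF _ hφC.continuous
      have a2 := hcF _ hPc
      rw [← integral_sub a1 a2, ← integral_const_mul]
      refine setIntegral_mono_on (a1.sub a2) (hIFn.const_mul _)
        measurableSet_Ioc fun t ht => ?_
      rw [e2 t ht]
      refine (le_abs_self _).trans ?_
      rw [abs_mul, abs_mul, Real.norm_eq_abs]
      have h2 := hb t
      have : |κ t| * |ε + (Ψ t - P t)| ≤ 1 * (2 * ε) := by
        have := hk t
        gcongr
      nlinarith [abs_nonneg (F t)]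
    have i3 : E₀ * φ 0 ≤ E₀ * P 0 + 2 * ε * |E₀| := by
      have hκz : κ 0 = 1 := κ.one_of_mem_closedBall (Metric.mem_closedBall_self (by
        change 0 ≤ T + 1; linarith))
      have : E₀ * φ 0 = E₀ * P 0 + E₀ * (ε + (Ψ 0 - P 0)) := by
        simp only [hφ]; rw [hκz]; ring
      rw [this]
      have h2 : E₀ * (ε + (Ψ 0 - P 0)) ≤ |E₀| * (2 * ε) := by
        refine (le_abs_self _).trans ?_
        rw [abs_mul]
        have := hb 0
        gcongr
      linarith
    rw [hres _ (fun t ht => by rw [hφd, hκ0 t ht, hκ'0 t ht]; ring),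
      hres _ (fun t ht => by simp only [hφ]; rw [hκ0 t ht]; ring)] at h
    rw [hres _ (fun t ht => by rw [hg0 t (fun h => absurd h.2 (by linarith))]; ring),
      hres _ (fun t ht => by rw [hP0 t (by linarith)]; ring), hM]
    linarith
  have hM0 : 0 < M := by
    have h1 : 0 ≤ ∫ t in S, ‖E t‖ := integral_nonneg fun _ => norm_nonneg _
    have h2 : 0 ≤ ∫ t in S, ‖F t‖ := integral_nonneg fun _ => norm_nonneg _
    positivity
  refine le_of_forall_pos_le_add fun δ hδ => ?_
  have := main (δ / M) (by positivity)
  rwa [div_mul_cancel₀ _ hM0.ne'] at this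

lemma gv_local (E₀ : ℝ) (E a b : ℝ → ℝ) (T : ℝ) (hT : 0 < T)
    (hE : LocallyIntegrableOn E (Ici 0))
    (ha : LocallyIntegrableOn a (Ici 0))
    (hb : LocallyIntegrableOn b (Ici 0))
    (haE : LocallyIntegrableOn (fun τ => a τ * E τ) (Ici 0))
    (hineq : ∀ φ : ℝ → ℝ, ContDiff ℝ 1 φ → HasCompactSupport φ → (∀ τ, 0 ≤ φ τ) →
      (∫ τ in Ioi (0:ℝ), -(deriv φ τ) * E τ)
        ≤ E₀ * φ 0 + ∫ τ in Ioi (0:ℝ), φ τ * (a τ * E τ + b τ)) :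
    ∀ᵐ τ ∂(volume.restrict (Ioc 0 T)),
      Real.exp (- ∫ ν in (0:ℝ)..τ, a ν) * E τ ≤
        E₀ + ∫ σ in (0:ℝ)..τ, Real.exp (- ∫ ν in (0:ℝ)..σ, a ν) * b σ := by
  have hint : ∀ f : ℝ → ℝ, LocallyIntegrableOn f (Ici 0) → IntervalIntegrable f volume 0 T := by
    intro f hf
    rw [intervalIntegrable_iff_integrableOn_Icc_of_le hT.le]
    exact hf.integrableOn_compact_subset Icc_subset_Ici_self isCompact_Icc
  have iE := hint _ hE
  have ia := hint _ ha
  have ib := hint _ hb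
  have iaE := hint _ haE
  set A : ℝ → ℝ := fun t => ∫ ν in (0:ℝ)..t, a ν with hA
  set u : ℝ → ℝ := fun t => Real.exp (- A t) with hu
  have hAac : AbsolutelyContinuousOnInterval A 0 T :=
    ia.absolutelyContinuousOnInterval_intervalIntegral (by simp)
  have huac : AbsolutelyContinuousOnInterval u 0 T := gv_ac_exp hAac
  have huc := huac.continuousOn
  have hu' : ∀ᵐ t, t ∈ uIcc 0 T → deriv u t = - (a t * u t) := by
    filter_upwards [ia.ae_hasDerivAt_integral] with t ht hmem
    have h1 : HasDerivAt A (a t) t := ht hmem 0 (by simp)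
    have h2 := h1.neg.exp
    have h3 : deriv u t = _ := h2.deriv
    rw [h3]; simp only [hu, Pi.neg_apply]; ring
  have iub : IntervalIntegrable (fun t => u t * b t) volume 0 T := ib.continuousOn_mul huc
  have iuE : IntervalIntegrable (fun t => u t * E t) volume 0 T := iE.continuousOn_mul huc
  set B : ℝ → ℝ := fun t => ∫ σ in (0:ℝ)..t, u σ * b σ with hB
  have hBac : AbsolutelyContinuousOnInterval B 0 T :=
    iub.absolutelyContinuousOnInterval_intervalIntegral (by simp)
  have hB' : ∀ᵐ t, t ∈ uIcc 0 T → deriv B t = u t * b t := by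
    filter_upwards [iub.ae_hasDerivAt_integral] with t ht hmem
    exact (ht hmem 0 (by simp)).deriv
  have iB : IntervalIntegrable B volume 0 T := hBac.continuousOn.intervalIntegrable
  have iEB : IntervalIntegrable (fun t => E₀ + B t) volume 0 T :=
    intervalIntegrable_const.add iB
  change ∀ᵐ τ ∂(volume.restrict (Ioc 0 T)), u τ * E τ ≤ E₀ + B τ
  have toI : ∀ f : ℝ → ℝ, IntervalIntegrable f volume 0 T → IntegrableOn f (Ioc 0 T) := fun f hf =>
    (intervalIntegrable_iff_integrableOn_Ioc_of_le hT.le).1 hf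
  refine ae_le_of_forall_setIntegral_le (toI _ iuE) (toI _ iEB) fun s hs _ => ?_
  set χ : ℝ → ℝ := s.indicator (fun _ => 1) with hχ
  have hχm : Measurable χ := measurable_const.indicator hs
  have hχ0 : ∀ t, 0 ≤ χ t := fun t => indicator_nonneg (fun _ _ => zero_le_one) t
  have hχ1 : ∀ t, ‖χ t‖ ≤ 1 := fun t => by
    rw [Real.norm_of_nonneg (hχ0 t)]
    exact indicator_le_self' (fun _ _ => zero_le_one) t
  have hconv : ∀ f : ℝ → ℝ, ∫ x in s, f x ∂(volume.restrict (Ioc 0 T)) =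
      ∫ t in (0:ℝ)..T, χ t * f t := by
    intro f
    rw [intervalIntegral.integral_of_le hT.le, ← integral_indicator hs]
    refine integral_congr_ae (Eventually.of_forall fun t => ?_)
    by_cases h : t ∈ s <;> simp [hχ, h]
  have hχf : ∀ f : ℝ → ℝ, IntervalIntegrable f volume 0 T →
      IntervalIntegrable (fun t => χ t * f t) volume 0 T := by
    intro f hf
    rw [intervalIntegrable_iff_integrableOn_Ioc_of_le hT.le] at hf ⊢
    exact Integrable.bdd_mul (c := 1) hf hχm.aestronglyMeasurable (Eventually.of_forall hχ1)
  have iχ : IntervalIntegrable χ volume 0 T := by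
    simpa using hχf (fun _ => 1) intervalIntegrable_const
  rw [hconv, hconv]
  set φ : ℝ → ℝ := fun t => - ∫ v in T..t, χ v with hφ
  have hφac : AbsolutelyContinuousOnInterval φ 0 T :=
    (iχ.absolutelyContinuousOnInterval_intervalIntegral (c := T) (by simp)).neg
  have hφc := hφac.continuousOn
  have hφ' : ∀ᵐ t, t ∈ uIcc 0 T → deriv φ t = - χ t := by
    filter_upwards [iχ.ae_hasDerivAt_integral] with t ht hmem
    exact (ht hmem T (by simp)).neg.deriv
  have hφT : φ T = 0 := by simp [hφ]
  have hφn : ∀ t, t ≤ T → 0 ≤ φ t := by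
    intro t ht
    simp only [hφ]
    rw [← intervalIntegral.integral_symm]
    exact intervalIntegral.integral_nonneg ht fun v _ => hχ0 v
  have hφ0 : φ 0 = ∫ t in (0:ℝ)..T, χ t := by
    simp only [hφ]; rw [← intervalIntegral.integral_symm]
  set g₀ : ℝ → ℝ := fun t => χ t * u t + φ t * (a t * u t) with hg₀
  have ig₀ : IntervalIntegrable g₀ volume 0 T :=
    (hχf _ huc.intervalIntegrable).add ((ia.mul_continuousOn huc).continuousOn_mul hφc)
  set g : ℝ → ℝ := (Ioc 0 T).indicator g₀ with hg
  have hgi : Integrable g := (integrable_indicator_iff measurableSet_Ioc).2 (toI _ ig₀)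
  have hg0 : ∀ t, t ∉ Ioc 0 T → g t = 0 := fun t ht => indicator_of_notMem ht _
  have hg1 : ∀ t, t ∈ Ioc 0 T → g t = g₀ t := fun t ht => indicator_of_mem ht _
  have iφaE : IntervalIntegrable (fun t => φ t * (u t * (a t * E t))) volume 0 T :=
    (iaE.continuousOn_mul huc).continuousOn_mul hφc
  have iφb : IntervalIntegrable (fun t => φ t * (u t * b t)) volume 0 T :=
    iub.continuousOn_mul hφc
  have ig₀E : IntervalIntegrable (fun t => g₀ t * E t) volume 0 T := by
    refine ((hχf _ iuE).add iφaE).congr (fun t _ => ?_)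
    simp only [hg₀]; ring
  have hgEeq : (fun t => g t * E t) = (Ioc 0 T).indicator (fun t => g₀ t * E t) := by
    ext t
    by_cases h : t ∈ Ioc 0 T <;> simp [hg, h]
  have hgE : IntegrableOn (fun t => g t * E t) (Ioi 0) := by
    rw [hgEeq]
    exact ((integrable_indicator_iff measurableSet_Ioc).2 (toI _ ig₀E)).integrableOn
  have hPin : ∀ t, 0 ≤ t → t ≤ T → ∫ v in t..T, g v = φ t * u t := by
    intro t h0 h1
    have hsub : uIcc t T ⊆ uIcc 0 T := by
      rw [uIcc_of_le h1, uIcc_of_le hT.le]; exact Icc_subset_Icc_left h0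
    have h2 := (hφac.mono hsub).integral_deriv_mul_eq_sub (huac.mono hsub)
    have h3 : ∫ v in t..T, g v = ∫ v in t..T, -(deriv φ v * u v + φ v * deriv u v) := by
      refine intervalIntegral.integral_congr_ae ?_
      filter_upwards [hφ', hu'] with v hv1 hv2 hv
      have hv3 := hsub (uIoc_subset_uIcc hv)
      rw [uIoc_of_le h1] at hv
      rw [hg1 v ⟨h0.trans_lt hv.1, hv.2⟩, hv1 hv3, hv2 hv3]
      simp only [hg₀]; ring
    rw [h3, intervalIntegral.integral_neg, h2, hφT]; ring
  have hPout : ∀ t, T < t → ∫ v in t..T, g v = 0 := by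
    intro t ht
    rw [intervalIntegral.integral_symm, neg_eq_zero]
    refine intervalIntegral.integral_zero_ae (Eventually.of_forall fun v hv => hg0 v ?_)
    rw [uIoc_of_le ht.le] at hv
    exact fun h => absurd h.2 (not_le.2 hv.1)
  have hup : ∀ t, 0 < u t := fun t => Real.exp_pos _
  have hP : ∀ t, 0 ≤ ∫ v in t..T, g v := by
    intro t
    rcases le_or_gt t T with h1 | h1
    · rcases le_or_gt 0 t with h0 | h0
      · rw [hPin t h0 h1]
        exact mul_nonneg (hφn t h1) (hup t).le
      · rw [← intervalIntegral.integral_add_adjacent_intervals (b := 0) hgi.intervalIntegrable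
          hgi.intervalIntegrable, hPin 0 le_rfl hT.le]
        have : ∫ v in t..0, g v = 0 := by
          refine intervalIntegral.integral_zero_ae (Eventually.of_forall fun v hv => hg0 v ?_)
          rw [uIoc_of_le h0.le] at hv
          exact fun h => absurd h.1 (not_lt.2 hv.2)
        rw [this, zero_add]
        exact mul_nonneg (hφn 0 hT.le) (hup 0).le
    · exact (hPout t h1).ge
  have hkey := gv_key E₀ E (fun τ => a τ * E τ + b τ) g T hT hE (haE.add hb) hineq hgi hg0 hgE hP
  have hres : ∀ f : ℝ → ℝ, (∀ t, T < t → f t = 0) →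
      ∫ t in Ioi (0:ℝ), f t = ∫ t in (0:ℝ)..T, f t := by
    intro f hf
    rw [intervalIntegral.integral_of_le hT.le]
    refine (setIntegral_eq_of_subset_of_forall_sdiff_eq_zero measurableSet_Ioi
      Ioc_subset_Ioi_self fun t ht => hf t ?_)
    by_contra h
    exact ht.2 ⟨ht.1, not_lt.1 h⟩
  have hu0 : u 0 = 1 := by simp [hu, hA]
  rw [hres _ (fun t ht => by rw [hg0 t (fun h => absurd h.2 (not_le.2 ht))]; ring),
    hres _ (fun t ht => by rw [hPout t ht]; ring), hPin 0 le_rfl hT.le, hu0, hφ0] at hkey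
  have k1 : ∫ t in (0:ℝ)..T, g t * E t = (∫ t in (0:ℝ)..T, χ t * (u t * E t)) +
      ∫ t in (0:ℝ)..T, φ t * (u t * (a t * E t)) := by
    rw [← intervalIntegral.integral_add (hχf _ iuE) iφaE]
    refine intervalIntegral.integral_congr_ae (Eventually.of_forall fun t ht => ?_)
    rw [uIoc_of_le hT.le] at ht
    rw [hg1 t ht]; simp only [hg₀]; ring
  have k2 : ∫ t in (0:ℝ)..T, (∫ v in t..T, g v) * (a t * E t + b t) =
      (∫ t in (0:ℝ)..T, φ t * (u t * (a t * E t))) + ∫ t in (0:ℝ)..T, φ t * (u t * b t) := by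
    rw [← intervalIntegral.integral_add iφaE iφb]
    refine intervalIntegral.integral_congr_ae (Eventually.of_forall fun t ht => ?_)
    rw [uIoc_of_le hT.le] at ht
    rw [hPin t ht.1.le ht.2]; ring
  have k3 : ∫ t in (0:ℝ)..T, φ t * (u t * b t) = ∫ t in (0:ℝ)..T, χ t * B t := by
    have h1 := hφac.integral_mul_deriv_eq_deriv_mul hBac
    have h2 : ∫ t in (0:ℝ)..T, φ t * deriv B t = ∫ t in (0:ℝ)..T, φ t * (u t * b t) := by
      refine intervalIntegral.integral_congr_ae ?_
      filter_upwards [hB'] with t ht hmem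
      rw [ht (uIoc_subset_uIcc hmem)]
    have h3 : ∫ t in (0:ℝ)..T, deriv φ t * B t = - ∫ t in (0:ℝ)..T, χ t * B t := by
      rw [← intervalIntegral.integral_neg]
      refine intervalIntegral.integral_congr_ae ?_
      filter_upwards [hφ'] with t ht hmem
      rw [ht (uIoc_subset_uIcc hmem)]; ring
    have hB0 : B 0 = 0 := by simp [hB]
    rw [h2, h3, hφT, hB0] at h1
    linarith
  have k4 : ∫ t in (0:ℝ)..T, χ t * (E₀ + B t) = E₀ * (∫ t in (0:ℝ)..T, χ t) +
      ∫ t in (0:ℝ)..T, χ t * B t := by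
    rw [← intervalIntegral.integral_const_mul,
      ← intervalIntegral.integral_add (iχ.const_mul _) (hχf _ iB)]
    congr 1; ext t; ring
  rw [k4]
  rw [k1, k2, k3] at hkey
  linarith

/-- **Generalized Gronwall inequality in variational form.**
If `E, a, b` are locally integrable on `[0,∞)`, `τ ↦ a τ * E τ` is locally integrable,
and for every nonnegative `φ ∈ C¹_c([0,∞))` one has
`∫₀^∞ −φ′ E ≤ E₀ φ(0) + ∫₀^∞ φ (aE + b)`, then for almost all `τ > 0`,
`E τ ≤ E₀ exp(∫₀^τ a) + ∫₀^τ b σ exp(∫_σ^τ a) dσ`. -/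
theorem gronwall_variational
    (E₀ : ℝ) (E a b : ℝ → ℝ)
    (hE : LocallyIntegrableOn E (Ici 0))
    (ha : LocallyIntegrableOn a (Ici 0))
    (hb : LocallyIntegrableOn b (Ici 0))
    (haE : LocallyIntegrableOn (fun τ => a τ * E τ) (Ici 0))
    (hineq : ∀ φ : ℝ → ℝ, ContDiff ℝ 1 φ → HasCompactSupport φ → (∀ τ, 0 ≤ φ τ) →
      (∫ τ in Ioi (0:ℝ), -(deriv φ τ) * E τ)
        ≤ E₀ * φ 0 + ∫ τ in Ioi (0:ℝ), φ τ * (a τ * E τ + b τ)) :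
    ∀ᵐ τ ∂(volume.restrict (Ioi (0:ℝ))),
      E τ ≤ E₀ * Real.exp (∫ ν in (0:ℝ)..τ, a ν)
        + ∫ σ in (0:ℝ)..τ, b σ * Real.exp (∫ ν in σ..τ, a ν) := by
  have hall : ∀ n : ℕ, ∀ᵐ τ ∂(volume : Measure ℝ), τ ∈ Ioc (0:ℝ) (n + 1) →
      Real.exp (- ∫ ν in (0:ℝ)..τ, a ν) * E τ ≤
        E₀ + ∫ σ in (0:ℝ)..τ, Real.exp (- ∫ ν in (0:ℝ)..σ, a ν) * b σ := fun n =>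
    (ae_restrict_iff' measurableSet_Ioc).1
      (gv_local E₀ E a b (n + 1) (by positivity) hE ha hb haE hineq)
  rw [ae_restrict_iff' measurableSet_Ioi]
  filter_upwards [ae_all_iff.2 hall] with τ h hτ
  have hτ0 : 0 < τ := hτ
  obtain ⟨n, hn⟩ := exists_nat_ge τ
  have h1 := h n ⟨hτ0, by linarith⟩
  have hint : ∀ x y : ℝ, 0 ≤ x → 0 ≤ y → IntervalIntegrable a volume x y := by
    intro x y hx hy
    rw [intervalIntegrable_iff]
    refine (ha.integrableOn_compact_subset ?_ isCompact_uIcc).mono_set uIoc_subset_uIcc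
    intro z hz
    exact (le_min hx hy).trans hz.1
  have h2 : ∫ σ in (0:ℝ)..τ, b σ * Real.exp (∫ ν in σ..τ, a ν) =
      Real.exp (∫ ν in (0:ℝ)..τ, a ν) *
        ∫ σ in (0:ℝ)..τ, Real.exp (- ∫ ν in (0:ℝ)..σ, a ν) * b σ := by
    rw [← intervalIntegral.integral_const_mul]
    refine intervalIntegral.integral_congr fun σ hσ => ?_
    rw [uIcc_of_le hτ0.le] at hσ
    have h3 := intervalIntegral.integral_add_adjacent_intervals
      (hint 0 σ le_rfl hσ.1) (hint σ τ hσ.1 hτ0.le)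
    rw [← mul_assoc, ← Real.exp_add, ← h3, mul_comm]
    congr 2; ring
  rw [h2, mul_comm E₀, ← mul_add]
  have h4 := mul_le_mul_of_nonneg_left h1 (Real.exp_pos (∫ ν in (0:ℝ)..τ, a ν)).le
  rwa [← mul_assoc, ← Real.exp_add, add_neg_cancel, Real.exp_zero, one_mul] at h4
end
end
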